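/- arXiv:1403.4231 — 2 statements merged into one kernel-verified Lean document; each statement's English description precedes it below -/
import Mathlib

section
/- Let R be a commutative ring, M an R-module, and Λ(M) its exterior algebra. Fix a finite index set I, linear functionals f_i ∈ M* (i ∈ I), and homogeneous degree-2 elements H^{ij} ∈ Λ(M) (i, j ∈ I). For homogeneous ξ, η ∈ Λ(M) define ξ ∧̂ η := (−1)^{|ξ|+1} Σ_{i,j ∈ I} H^{ij} ∧ ι_{f_i}(ξ) ∧ ι_{f_j}(η), where ι_f denotes left interior product (contraction) by f. Then for all homogeneous ξ, η, ζ ∈ Λ(M): (ξ ∧̂ η) ∧ ζ + (ξ ∧ η) ∧̂ ζ = ξ ∧ (η ∧̂ ζ) + ξ ∧̂ (η ∧ ζ). -/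
namespace Stmt7

/-- The degree-`p` part of the exterior algebra, as the `p`-th power of the image of `M`. -/
def Gr (R M : Type) [CommRing R] [AddCommGroup M] [Module R M] (p : ℕ) :
    Submodule R (ExteriorAlgebra R M) :=
  (LinearMap.range (ExteriorAlgebra.ι R : M →ₗ[R] ExteriorAlgebra R M)) ^ p

/-- The bilinear operation `ξ ∧̂ η = (−1)^{|ξ|+1} Σ_{i,j} H^{ij} ∧ ι_{f_i}(ξ) ∧ ι_{f_j}(η)`
(with `p = |ξ|` passed explicitly). -/
noncomputable def hatWedge {R M : Type} [CommRing R] [AddCommGroup M] [Module R M]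
    {I : Type} [Fintype I]
    (ic : Module.Dual R M → ExteriorAlgebra R M → ExteriorAlgebra R M)
    (f : I → Module.Dual R M) (H : I → I → ExteriorAlgebra R M)
    (p : ℕ) (ξ η : ExteriorAlgebra R M) : ExteriorAlgebra R M :=
  ((-1 : ℤ) ^ (p + 1)) • ∑ i : I, ∑ j : I, H i j * ic (f i) ξ * ic (f j) η

theorem two_central (R M : Type) [CommRing R] [AddCommGroup M] [Module R M]
    (h : ExteriorAlgebra R M) (hh : h ∈ Gr R M 2) (x : ExteriorAlgebra R M) :
    h * x = x * h := by
  have anti : ∀ a b : M, ExteriorAlgebra.ι R a * ExteriorAlgebra.ι R b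
      = -(ExteriorAlgebra.ι R b * ExteriorAlgebra.ι R a) := fun a b =>
    eq_neg_of_add_eq_zero_left (ExteriorAlgebra.ι_add_mul_swap a b)
  unfold Gr at hh
  rw [pow_two] at hh
  induction hh using Submodule.mul_induction_on' with
  | mem_mul_mem u hu v hv =>
    obtain ⟨a, rfl⟩ := hu
    obtain ⟨b, rfl⟩ := hv
    induction x using ExteriorAlgebra.induction with
    | algebraMap r => exact (Algebra.commutes r _).symm
    | ι m =>
      rw [mul_assoc, anti b m, mul_neg, ← mul_assoc, anti a m, neg_mul, neg_neg, mul_assoc]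
    | mul y z hy hz => rw [← mul_assoc, hy, mul_assoc, hz, mul_assoc]
    | add y z hy hz => rw [mul_add, add_mul, hy, hz]
  | add u _ v _ hu hv => rw [add_mul, mul_add, hu, hv]

/-- for degree-2 elements `H^{ij}` and interior products `ι_{f_i}` (graded
derivations lowering degree by one), the operation `∧̂` satisfies the 'Hochschild cocycle'
identity `(ξ ∧̂ η) ∧ ζ + (ξ ∧ η) ∧̂ ζ = ξ ∧ (η ∧̂ ζ) + ξ ∧̂ (η ∧ ζ)` on homogeneous
elements. -/
theorem statement_7 (R M : Type) [CommRing R] [AddCommGroup M] [Module R M]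
    (I : Type) [Fintype I] (f : I → Module.Dual R M)
    (ic : Module.Dual R M → ExteriorAlgebra R M → ExteriorAlgebra R M)
    (ic_add : ∀ g x y, ic g (x + y) = ic g x + ic g y)
    (ic_smul : ∀ g (r : R) x, ic g (r • x) = r • ic g x)
    (ic_ι : ∀ g (m : M), ic g (ExteriorAlgebra.ι R m) = algebraMap R _ (g m))
    (ic_algebraMap : ∀ g (r : R), ic g (algebraMap R (ExteriorAlgebra R M) r) = 0)
    (ic_grade : ∀ g (p : ℕ) x, x ∈ Gr R M (p + 1) → ic g x ∈ Gr R M p)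
    (ic_der : ∀ g (p : ℕ) x y, x ∈ Gr R M p →
      ic g (x * y) = ic g x * y + ((-1 : ℤ) ^ p) • (x * ic g y))
    (H : I → I → ExteriorAlgebra R M) (hH : ∀ i j, H i j ∈ Gr R M 2) :
    ∀ (p q r : ℕ) (ξ η ζ : ExteriorAlgebra R M),
      ξ ∈ Gr R M p → η ∈ Gr R M q → ζ ∈ Gr R M r →
      hatWedge ic f H p ξ η * ζ + hatWedge ic f H (p + q) (ξ * η) ζ
        = ξ * hatWedge ic f H q η ζ + hatWedge ic f H p ξ (η * ζ) := by
  intro p q r ξ η ζ hξ hη hζ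
  unfold hatWedge
  simp only [smul_mul_assoc, mul_smul_comm, Finset.sum_mul, Finset.mul_sum, Finset.smul_sum,
    ← Finset.sum_add_distrib]
  refine Finset.sum_congr rfl fun i _ => Finset.sum_congr rfl fun j _ => ?_
  rw [ic_der (f i) p ξ η hξ, ic_der (f j) q η ζ hη]
  have hc : ξ * (H i j * ic (f i) η * ic (f j) ζ) = H i j * ξ * ic (f i) η * ic (f j) ζ := by
    rw [two_central R M (H i j) (hH i j) ξ]
    simp only [mul_assoc]
  rw [hc]
  have h1 : ((-1 : ℤ) ^ (p + q + 1)) * (-1) ^ p = (-1) ^ (q + 1) := by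
    rw [← pow_add, show p + q + 1 + p = 2 * p + (q + 1) by ring, pow_add, pow_mul]
    simp
  have h2 : ((-1 : ℤ) ^ (p + 1)) * (-1) ^ q = (-1) ^ (p + q + 1) := by
    rw [← pow_add]
    congr 1
    ring
  simp only [mul_add, add_mul, mul_smul_comm, smul_mul_assoc, smul_add, smul_smul, h1, h2,
    ← mul_assoc]
  abel

end Stmt7
end

section
/- On an open set U ⊆ ℝⁿ, let ω^{ij} be a smooth antisymmetric bivector and Γ^i_{jk} smooth Christoffel symbols such that the pair (ω, ∇) is Poisson-compatible. Over ℝ[λ]/(λ²) define the product ξ ∧_Q η := ξ ∧ η + (λ/2) ω^{ij} ∇_i ξ ∧ ∇_j η on differential forms. Then for every homogeneous smooth p-form ξ and every smooth form η: d(ξ ∧_Q η) − (dξ) ∧_Q η − (−1)^p ξ ∧_Q (dη) = −λ H^{ji} ∧ (∂_i⌟ξ) ∧ ∇_j η + λ (−1)^p H^{ij} ∧ ∇_i ξ ∧ (∂_j⌟η), where H^{ij} := (1/4) ω^{is}(T^j_{nm;s} − 2 R^j_{nms}) dx^m ∧ dx^n. -/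
namespace Stmt8

variable {n : ℕ}

/-- A point of the coordinate chart. -/
abbrev Pt (n : ℕ) := Fin n → ℝ

/-- The coefficient family of a differential form: a `p`-form is a family
`ξ_{a 0, …, a (p−1)}` of functions (only the first `p` index slots are used). -/
abbrev Form (n : ℕ) := (ℕ → Fin n) → Pt n → ℝ

/-- Partial derivative in the `i`-th coordinate direction. -/
noncomputable def pd (i : Fin n) (f : Pt n → ℝ) (x : Pt n) : ℝ :=
  fderiv ℝ f x (Pi.single i 1)

/-- Wedge product of a `p`-form and a `q`-form (coordinate formula). -/
noncomputable def wedge (p q : ℕ) (ξ η : Form n) : Form n := fun a x =>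
  ((p.factorial * q.factorial : ℕ) : ℝ)⁻¹ *
    ∑ σ : Equiv.Perm (Fin (p + q)),
      ((Equiv.Perm.sign σ : ℤ) : ℝ) *
        ξ (fun t => if h : t < p then a ((σ ⟨t, by omega⟩ : Fin (p + q)) : ℕ) else a t) x *
        η (fun t => if h : t < q then a ((σ ⟨p + t, by omega⟩ : Fin (p + q)) : ℕ) else a t) x

/-- Exterior derivative of a `p`-form:
`(dξ)_{a_0⋯a_p} = Σ_k (−1)^k ∂_{a_k} ξ_{a_0⋯(omit a_k)⋯a_p}`. -/
noncomputable def extd (p : ℕ) (ξ : Form n) : Form n := fun a x =>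
  ∑ k : Fin (p + 1),
    (-1 : ℝ) ^ (k : ℕ) *
      pd (a (k : ℕ)) (ξ (fun t => if t < (k : ℕ) then a t else a (t + 1))) x

/-- Interior product of a `p`-form with the `m`-th coordinate vector field
(zero on `0`-forms). -/
def intr (p : ℕ) (m : Fin n) (ξ : Form n) : Form n :=
  if p = 0 then (fun _ _ => 0)
  else fun a x => ξ (fun t => if t = 0 then m else a (t - 1)) x

/-- Interior product of a `p`-form with a vector field `v` (zero on `0`-forms). -/
noncomputable def iprod (p : ℕ) (v : Fin n → Pt n → ℝ) (ξ : Form n) : Form n :=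
  if p = 0 then (fun _ _ => 0)
  else fun a x => ∑ m, v m x * ξ (fun t => if t = 0 then m else a (t - 1)) x

/-- Covariant derivative of a `p`-form:
`(∇_i ξ)_{a_1⋯a_p} = ∂_i ξ_{a_1⋯a_p} − Σ_k Γ^m_{i a_k} ξ_{⋯ m ⋯}`. -/
noncomputable def nabla (Γ : Fin n → Fin n → Fin n → Pt n → ℝ) (i : Fin n) (p : ℕ)
    (ξ : Form n) : Form n := fun a x =>
  pd i (ξ a) x
    - ∑ k : Fin p, ∑ m, Γ m i (a (k : ℕ)) x * ξ (fun t => if t = (k : ℕ) then m else a t) x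

/-- Multiplication of a form by a scalar function. -/
def fmul (f : Pt n → ℝ) (ξ : Form n) : Form n := fun a x => f x * ξ a x

/-- `ξ` depends only on its first `p` index slots. -/
def DependsOn (p : ℕ) (ξ : Form n) : Prop :=
  ∀ a b : ℕ → Fin n, (∀ t, t < p → a t = b t) → ξ a = ξ b

/-- `ξ` is totally antisymmetric in its first `p` index slots. -/
def IsAnti (p : ℕ) (ξ : Form n) : Prop :=
  ∀ (a : ℕ → Fin n) (i j : ℕ), i < p → j < p → i ≠ j →
    ∀ x, ξ (fun t => a (Equiv.swap i j t)) x = - ξ a x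

/-- `ξ` has smooth coefficients on `U`. -/
def SmoothOn (U : Set (Pt n)) (ξ : Form n) : Prop :=
  ∀ a, ContDiffOn ℝ (⊤ : ℕ∞) (ξ a) U

/-- `ξ` is (the coefficient family of) a smooth `p`-form on `U`. -/
def IsPForm (U : Set (Pt n)) (p : ℕ) (ξ : Form n) : Prop :=
  DependsOn p ξ ∧ IsAnti p ξ ∧ SmoothOn U ξ

/-- Torsion `T^i_{jk} = Γ^i_{jk} - Γ^i_{kj}`. -/
def Tor (Γ : Fin n → Fin n → Fin n → Pt n → ℝ) (i j k : Fin n) (x : Pt n) : ℝ :=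
  Γ i j k x - Γ i k j x

/-- Curvature `R^l_{ijk} = ∂_j Γ^l_{ki} − ∂_k Γ^l_{ji} + Γ^m_{ki} Γ^l_{jm} − Γ^m_{ji} Γ^l_{km}`. -/
noncomputable def Rc (Γ : Fin n → Fin n → Fin n → Pt n → ℝ) (l i j k : Fin n)
    (x : Pt n) : ℝ :=
  pd j (Γ l k i) x - pd k (Γ l j i) x
    + ∑ m, Γ m k i x * Γ l j m x - ∑ m, Γ m j i x * Γ l k m x

/-- Covariant derivative of the torsion:
`T^j_{ab;s} = ∂_s T^j_{ab} + Γ^j_{sp} T^p_{ab} − Γ^p_{sa} T^j_{pb} − Γ^p_{sb} T^j_{ap}`. -/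
noncomputable def covT (Γ : Fin n → Fin n → Fin n → Pt n → ℝ) (j a b s : Fin n)
    (x : Pt n) : ℝ :=
  pd s (Tor Γ j a b) x + ∑ p, Γ j s p x * Tor Γ p a b x
    - ∑ p, Γ p s a x * Tor Γ j p b x - ∑ p, Γ p s b x * Tor Γ j a p x

/-- The pair `(ω, ∇)` is Poisson-compatible on `U`. -/
def PoissonCompat (U : Set (Pt n)) (ω : Fin n → Fin n → Pt n → ℝ)
    (Γ : Fin n → Fin n → Fin n → Pt n → ℝ) : Prop :=
  ∀ i j m, ∀ x ∈ U,
    pd m (ω i j) x + ∑ k, ω k j x * Γ i k m x + ∑ k, ω i k x * Γ j k m x = 0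

/-- The 2-form `H^{ij} = (1/4) ω^{is}(T^j_{nm;s} − 2 R^j_{nms}) dx^m ∧ dx^n`
(as a coefficient family, slots `(a 0, a 1) = (m, n)`). -/
noncomputable def Hform (ω : Fin n → Fin n → Pt n → ℝ)
    (Γ : Fin n → Fin n → Fin n → Pt n → ℝ) (i j : Fin n) : Form n := fun a x =>
  (1 / 4 : ℝ) * ∑ s, ω i s x *
    ((covT Γ j (a 1) (a 0) s x - 2 * Rc Γ j (a 1) (a 0) s x)
      - (covT Γ j (a 0) (a 1) s x - 2 * Rc Γ j (a 0) (a 1) s x))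

/-- The `λ`-correction term `(1/2) ω^{ij} ∇_i ξ ∧ ∇_j η` of the functorial product `∧_Q`. -/
noncomputable def Qcorr (ω : Fin n → Fin n → Pt n → ℝ)
    (Γ : Fin n → Fin n → Fin n → Pt n → ℝ) (p q : ℕ) (ξ η : Form n) : Form n :=
  (2⁻¹ : ℝ) • ∑ i, ∑ j, fmul (ω i j) (wedge p q (nabla Γ i p ξ) (nabla Γ j q η))

/-- Basis monomial of the exterior algebra. -/
noncomputable def mono (p : ℕ) (b : Fin p → Fin n) : ExteriorAlgebra ℝ (Fin n → ℝ) :=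
  ExteriorAlgebra.ιMulti ℝ p (fun i => (Pi.single (b i) (1 : ℝ) : Fin n → ℝ))

/-- Basis one-form. -/
noncomputable def eb (i : Fin n) : ExteriorAlgebra ℝ (Fin n → ℝ) :=
  ExteriorAlgebra.ι ℝ (Pi.single i (1 : ℝ) : Fin n → ℝ)

/-- Extend a finite index tuple by a default value. -/
def ext0 (z : Fin n) (p : ℕ) (b : Fin p → Fin n) : ℕ → Fin n :=
  fun t => if h : t < p then b ⟨t, h⟩ else z

/-- The element of the exterior algebra defined by the components at `x`. -/
noncomputable def Phi (z : Fin n) (p : ℕ) (x : Pt n) (ξ : Form n) :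
    ExteriorAlgebra ℝ (Fin n → ℝ) :=
  ((p.factorial : ℝ))⁻¹ • ∑ b : Fin p → Fin n, ξ (ext0 z p b) x • mono p b

theorem mono_zero (b : Fin 0 → Fin n) : mono 0 b = 1 := by
  simp [mono, ExteriorAlgebra.ιMulti_apply]

theorem mono_eq_prod (p : ℕ) (b : Fin p → Fin n) :
    mono p b = (List.ofFn (fun i => eb (b i))).prod := by
  simp [mono, eb, ExteriorAlgebra.ιMulti_apply]

theorem mono_append {p q : ℕ} (b : Fin p → Fin n) (c : Fin q → Fin n) :
    mono (p + q) (Fin.append b c) = mono p b * mono q c := by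
  rw [mono_eq_prod, mono_eq_prod, mono_eq_prod, ← List.prod_append, ← List.ofFn_fin_append]
  congr 2
  funext i
  refine Fin.addCases (fun j => ?_) (fun j => ?_) i <;> simp

theorem mono_cons {p : ℕ} (c : Fin n) (b : Fin p → Fin n) :
    mono (p + 1) (Fin.cons c b) = eb c * mono p b := by
  simp [mono_eq_prod, List.ofFn_succ]

theorem mono_perm {p : ℕ} (b : Fin p → Fin n) (σ : Equiv.Perm (Fin p)) :
    mono p (b ∘ σ) = ((Equiv.Perm.sign σ : ℤ) : ℝ) • mono p b := by
  have h := (ExteriorAlgebra.ιMulti ℝ (M := Fin n → ℝ) p).map_perm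
    (fun i => (Pi.single (b i) (1 : ℝ) : Fin n → ℝ)) σ
  unfold mono
  rw [Int.cast_smul_eq_zsmul]
  exact h

theorem sign_sq (p : ℕ) (σ : Equiv.Perm (Fin p)) :
    ((Equiv.Perm.sign σ : ℤ) : ℝ) * ((Equiv.Perm.sign σ : ℤ) : ℝ) = 1 := by
  rcases Int.units_eq_one_or (Equiv.Perm.sign σ) with h | h <;> simp [h]

theorem mono_insertNth {p : ℕ} (k : Fin (p + 1)) (c : Fin n) (b : Fin p → Fin n) :
    mono (p + 1) (k.insertNth c b : Fin (p + 1) → Fin n) = (-1 : ℝ) ^ (k : ℕ) • (eb c * mono p b) := by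
  rw [← Fin.cons_comp_cycleRange, mono_perm, mono_cons, Fin.sign_cycleRange]
  simp

theorem eb_anti (v w : Fin n) : eb v * eb w = - (eb w * eb v) := by
  rw [eq_neg_iff_add_eq_zero]
  exact ExteriorAlgebra.ι_add_mul_swap _ _

theorem eb_mono (v : Fin n) (p : ℕ) (b : Fin p → Fin n) :
    eb v * mono p b = (-1 : ℝ) ^ p • (mono p b * eb v) := by
  induction p with
  | zero => simp [mono_zero]
  | succ p ih =>
    rw [← Fin.cons_self_tail b, mono_cons, ← mul_assoc, eb_anti, neg_mul, mul_assoc, ih, pow_succ]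
    simp [mul_assoc]

theorem eb_Phi (z v : Fin n) (p : ℕ) (x : Pt n) (ξ : Form n) :
    eb v * Phi z p x ξ = (-1 : ℝ) ^ p • (Phi z p x ξ * eb v) := by
  unfold Phi
  simp only [Finset.mul_sum, Finset.sum_mul, mul_smul_comm, smul_mul_assoc, eb_mono,
    Finset.smul_sum]
  refine Finset.sum_congr rfl fun b _ => ?_
  simp only [smul_smul]
  congr 1
  ring

theorem Phi_wedge (z : Fin n) (p q : ℕ) (x : Pt n) (ξ η : Form n)
    (hξ : DependsOn p ξ) (hη : DependsOn q η) :
    Phi z (p + q) x (wedge p q ξ η) = Phi z p x ξ * Phi z q x η := by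
  have key : ∀ σ : Equiv.Perm (Fin (p + q)),
      ∑ b : Fin (p + q) → Fin n, (((Equiv.Perm.sign σ : ℤ) : ℝ) *
        ξ (fun t => if h : t < p then ext0 z (p+q) b ((σ ⟨t, by omega⟩ : Fin (p + q)) : ℕ)
            else ext0 z (p+q) b t) x *
        η (fun t => if h : t < q then ext0 z (p+q) b ((σ ⟨p + t, by omega⟩ : Fin (p + q)) : ℕ)
            else ext0 z (p+q) b t) x) • mono (p + q) b
      = ∑ b : Fin p → Fin n, ∑ c : Fin q → Fin n, (ξ (ext0 z p b) x * η (ext0 z q c) x) •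
          (mono p b * mono q c) := by
    intro σ
    rw [← Fintype.sum_prod_type']
    symm
    refine Fintype.sum_equiv ((Fin.appendEquiv p q).trans (Equiv.arrowCongr σ (Equiv.refl _))) _ _ ?_
    rintro ⟨b, c⟩
    have h1 : ((Fin.appendEquiv p q).trans (Equiv.arrowCongr σ (Equiv.refl _))) (b, c)
        = Fin.append b c ∘ (σ⁻¹ : Equiv.Perm _) := by
      funext t; rfl
    rw [h1, mono_perm, mono_append, smul_smul]
    have h2 : ξ (fun t => if h : t < p then
          ext0 z (p+q) (Fin.append b c ∘ (σ⁻¹ : Equiv.Perm _)) ((σ ⟨t, by omega⟩ : Fin (p + q)) : ℕ)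
            else ext0 z (p+q) (Fin.append b c ∘ (σ⁻¹ : Equiv.Perm _)) t) = ξ (ext0 z p b) := by
      apply hξ
      intro t ht
      have : (⟨t, by omega⟩ : Fin (p+q)) = Fin.castAdd q ⟨t, ht⟩ := rfl
      simp only [ext0, ht, dif_pos, this, Fin.is_lt, Fin.eta, Function.comp,
        Equiv.Perm.inv_def, Equiv.symm_apply_apply, Fin.append_left]
    have h3 : η (fun t => if h : t < q then
          ext0 z (p+q) (Fin.append b c ∘ (σ⁻¹ : Equiv.Perm _)) ((σ ⟨p + t, by omega⟩ : Fin (p + q)) : ℕ)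
            else ext0 z (p+q) (Fin.append b c ∘ (σ⁻¹ : Equiv.Perm _)) t) = η (ext0 z q c) := by
      apply hη
      intro t ht
      have : (⟨p + t, by omega⟩ : Fin (p+q)) = Fin.natAdd p ⟨t, ht⟩ := rfl
      simp only [ext0, ht, dif_pos, this, Fin.is_lt, Fin.eta, Function.comp,
        Equiv.Perm.inv_def, Equiv.symm_apply_apply, Fin.append_right]
    rw [h2, h3]
    congr 1
    have := sign_sq _ σ
    simp only [Equiv.Perm.sign_inv]
    linear_combination (- ξ (ext0 z p b) x * η (ext0 z q c) x) * this
  have hL : Phi z (p + q) x (wedge p q ξ η) = (((p+q).factorial : ℝ))⁻¹ •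
      (((p.factorial * q.factorial : ℕ) : ℝ)⁻¹ • ∑ σ : Equiv.Perm (Fin (p + q)),
        ∑ b : Fin p → Fin n, ∑ c : Fin q → Fin n, (ξ (ext0 z p b) x * η (ext0 z q c) x) •
          (mono p b * mono q c)) := by
    unfold Phi wedge
    congr 1
    rw [Finset.sum_congr rfl (fun σ _ => (key σ).symm), Finset.sum_comm, Finset.smul_sum]
    refine Finset.sum_congr rfl fun b _ => ?_
    rw [← Finset.sum_smul, smul_smul]
  rw [hL]
  simp only [Finset.sum_const, Finset.card_univ, Fintype.card_perm, Fintype.card_fin]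
  rw [← Nat.cast_smul_eq_nsmul ℝ, smul_smul, smul_smul, mul_assoc]
  have hc : (((p+q).factorial : ℝ))⁻¹ * (((p.factorial * q.factorial : ℕ) : ℝ)⁻¹ *
      ((p+q).factorial : ℝ)) = ((p.factorial * q.factorial : ℕ) : ℝ)⁻¹ := by
    have h2 : ((p+q).factorial : ℝ) ≠ 0 := by positivity
    field_simp
  rw [hc]
  unfold Phi
  simp only [Finset.mul_sum, Finset.sum_mul, mul_smul_comm, smul_mul_assoc, Finset.smul_sum]
  rw [Finset.sum_comm]
  refine Finset.sum_congr rfl fun c _ => Finset.sum_congr rfl fun b _ => ?_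
  simp only [smul_smul]
  congr 1
  push_cast
  rw [mul_inv]; ring

/-- Coefficientwise partial derivative of a form. -/
noncomputable def pdF (k : Fin n) (ξ : Form n) : Form n := fun a => pd k (ξ a)

theorem Phi_extd (z : Fin n) (p : ℕ) (x : Pt n) (ξ : Form n) (hξ : DependsOn p ξ) :
    Phi z (p + 1) x (extd p ξ) = ∑ k, eb k * Phi z p x (pdF k ξ) := by
  have key : ∀ k : Fin (p + 1), ∑ b : Fin (p + 1) → Fin n, ((-1 : ℝ) ^ (k : ℕ) *
      pd (ext0 z (p+1) b (k : ℕ)) (ξ (fun t => if t < (k : ℕ) then ext0 z (p+1) b t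
        else ext0 z (p+1) b (t + 1))) x) • mono (p+1) b
      = ∑ c : Fin n, ∑ b : Fin p → Fin n, (pd c (ξ (ext0 z p b)) x) • (eb c * mono p b) := by
    intro k
    rw [← Fintype.sum_prod_type']
    symm
    refine Fintype.sum_equiv (Fin.insertNthEquiv (fun _ => Fin n) k) _ _ ?_
    rintro ⟨c, b⟩
    have h0 : (Fin.insertNthEquiv (fun _ => Fin n) k) (c, b)
      = (k.insertNth c b : Fin (p + 1) → Fin n) := rfl
    rw [h0]
    rw [mono_insertNth, smul_smul]
    have h1 : ext0 z (p+1) (k.insertNth c b : Fin (p + 1) → Fin n) (k : ℕ) = c := by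
      simp only [ext0, Fin.is_lt, dif_pos, Fin.eta, Fin.insertNth_apply_same]
    have h2 : ξ (fun t => if t < (k : ℕ) then ext0 z (p+1) (k.insertNth c b : Fin (p + 1) → Fin n) t
        else ext0 z (p+1) (k.insertNth c b : Fin (p + 1) → Fin n) (t + 1)) = ξ (ext0 z p b) := by
      apply hξ
      intro t ht
      have h3 : (k.insertNth c b : Fin (p + 1) → Fin n) (k.succAbove ⟨t, ht⟩) = b ⟨t, ht⟩ := by simp
      by_cases h : t < (k : ℕ)
      · rw [Fin.succAbove_of_castSucc_lt _ _ (by exact h)] at h3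
        have h4 : t < p + 1 := by omega
        simp only [h, ht, h4, ext0, if_true, dif_pos]
        exact h3
      · rw [Fin.succAbove_of_le_castSucc _ _ (by exact not_lt.mp h)] at h3
        have h4 : t + 1 < p + 1 := by omega
        simp only [h, ht, h4, ext0, if_false, dif_pos]
        exact h3
    rw [h1, h2]
    congr 1
    have : (-1 : ℝ) ^ (k : ℕ) * (-1 : ℝ) ^ (k : ℕ) = 1 := by
      rw [← mul_pow]; simp
    linear_combination (- pd c (ξ (ext0 z p b)) x) * this
  have hL : Phi z (p + 1) x (extd p ξ) = (((p+1).factorial : ℝ))⁻¹ •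
      ∑ k : Fin (p + 1), ∑ c : Fin n, ∑ b : Fin p → Fin n,
        (pd c (ξ (ext0 z p b)) x) • (eb c * mono p b) := by
    unfold Phi extd
    congr 1
    rw [Finset.sum_congr rfl (fun σ _ => (key σ).symm), Finset.sum_comm]
    refine Finset.sum_congr rfl fun b _ => ?_
    rw [← Finset.sum_smul]
  rw [hL]
  simp only [Finset.sum_const, Finset.card_univ, Fintype.card_fin]
  rw [← Nat.cast_smul_eq_nsmul ℝ, smul_smul, Nat.factorial_succ]
  have : (((p + 1) * p.factorial : ℕ) : ℝ)⁻¹ * ((p + 1 : ℕ) : ℝ) = (p.factorial : ℝ)⁻¹ := by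
    push_cast
    have h1 : (p : ℝ) + 1 ≠ 0 := by positivity
    have h2 : (p.factorial : ℝ) ≠ 0 := by positivity
    field_simp
  rw [this]
  unfold Phi pdF
  simp only [Finset.mul_sum, mul_smul_comm, Finset.smul_sum]

/-- Contraction with the `m`-th coordinate vector on the exterior algebra. -/
noncomputable def ctr (m : Fin n) :
    ExteriorAlgebra ℝ (Fin n → ℝ) →ₗ[ℝ] ExteriorAlgebra ℝ (Fin n → ℝ) :=
  CliffordAlgebra.contractLeft (Q := (0 : QuadraticForm ℝ (Fin n → ℝ)))
    (LinearMap.proj m : (Fin n → ℝ) →ₗ[ℝ] ℝ)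

theorem ctr_eb_mul (m c : Fin n) (X : ExteriorAlgebra ℝ (Fin n → ℝ)) :
    ctr m (eb c * X) = (if c = m then (1 : ℝ) else 0) • X - eb c * ctr m X := by
  have h := CliffordAlgebra.contractLeft_ι_mul (Q := (0 : QuadraticForm ℝ (Fin n → ℝ)))
    (LinearMap.proj m : (Fin n → ℝ) →ₗ[ℝ] ℝ) (Pi.single c 1) X
  have h2 : (LinearMap.proj m : (Fin n → ℝ) →ₗ[ℝ] ℝ) (Pi.single c 1)
      = if c = m then (1 : ℝ) else 0 := by
    simp [Pi.single_apply, eq_comm]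
  rw [h2] at h
  exact h

theorem ctr_one (m : Fin n) : ctr m (1 : ExteriorAlgebra ℝ (Fin n → ℝ)) = 0 :=
  CliffordAlgebra.contractLeft_one _ _

/-- One-forms with given coefficients. -/
noncomputable def onef (g : Fin n → ℝ) : ExteriorAlgebra ℝ (Fin n → ℝ) := ∑ a, g a • eb a

theorem onef_eb (g : Fin n → ℝ) (c : Fin n) : onef g * eb c = - (eb c * onef g) := by
  unfold onef
  rw [Finset.sum_mul, Finset.mul_sum, ← Finset.sum_neg_distrib]
  refine Finset.sum_congr rfl fun a _ => ?_
  rw [smul_mul_assoc, mul_smul_comm, eb_anti a c, smul_neg]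

/-- The derivation of the exterior algebra attached to a matrix. -/
noncomputable def Dop (G : Fin n → Fin n → ℝ) :
    ExteriorAlgebra ℝ (Fin n → ℝ) →ₗ[ℝ] ExteriorAlgebra ℝ (Fin n → ℝ) :=
  ∑ m, (LinearMap.mulLeft ℝ (onef (G m))).comp (ctr m)

theorem Dop_apply (G : Fin n → Fin n → ℝ) (X : ExteriorAlgebra ℝ (Fin n → ℝ)) :
    Dop G X = ∑ m, onef (G m) * ctr m X := by
  simp [Dop, LinearMap.sum_apply]

theorem Dop_eb_mul (G : Fin n → Fin n → ℝ) (c : Fin n) (X : ExteriorAlgebra ℝ (Fin n → ℝ)) :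
    Dop G (eb c * X) = onef (G c) * X + eb c * Dop G X := by
  simp only [Dop_apply, ctr_eb_mul, mul_sub, Finset.sum_sub_distrib, Finset.mul_sum]
  simp only [← mul_assoc, onef_eb, neg_mul, Finset.sum_neg_distrib, sub_neg_eq_add]
  congr 1
  simp

theorem Dop_mono (G : Fin n → Fin n → ℝ) (p : ℕ) (c : Fin p → Fin n) :
    Dop G (mono p c) = ∑ k, ∑ a, G (c k) a • mono p (Function.update c k a) := by
  induction p with
  | zero => simp [mono_zero, Dop_apply, ctr_one]
  | succ p ih =>
    rw [← Fin.cons_self_tail c]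
    generalize Fin.tail c = c'
    generalize c 0 = c0
    rw [mono_cons, Dop_eb_mul, ih, Fin.sum_univ_succ]
    congr 1
    · simp only [Fin.cons_zero, Fin.update_cons_zero, mono_cons]
      simp [onef, Finset.sum_mul]
    · simp only [Fin.cons_succ, ← Fin.cons_update, mono_cons, Finset.mul_sum, mul_smul_comm]

/-- Action of a matrix of functions on the slots of a form. -/
noncomputable def aF (G : Fin n → Fin n → Pt n → ℝ) (p : ℕ) (ξ : Form n) : Form n := fun a x =>
  ∑ k : Fin p, ∑ m, G m (a (k : ℕ)) x * ξ (fun t => if t = (k : ℕ) then m else a t) x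

theorem ext0_update (z : Fin n) (p : ℕ) (b : Fin p → Fin n) (k : Fin p) (m : Fin n) :
    (fun t => if t = (k : ℕ) then m else ext0 z p b t) = ext0 z p (Function.update b k m) := by
  funext t
  by_cases h : t = (k : ℕ)
  · subst h
    simp only [ext0, if_true, Fin.is_lt, dif_pos, Fin.eta, Function.update_self]
  · by_cases ht : t < p
    · have : (⟨t, ht⟩ : Fin p) ≠ k := fun h' => h (by rw [← h'])
      simp only [ext0, h, if_false, ht, dif_pos, Function.update_of_ne this]
    · simp [ext0, h, ht]

theorem ext0_val (z : Fin n) (p : ℕ) (b : Fin p → Fin n) (k : Fin p) :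
    ext0 z p b (k : ℕ) = b k := by
  simp only [ext0, Fin.is_lt, dif_pos, Fin.eta]

theorem Phi_aF (z : Fin n) (p : ℕ) (x : Pt n) (G : Fin n → Fin n → Pt n → ℝ) (ξ : Form n) :
    Phi z p x (aF G p ξ) = Dop (fun m a => G m a x) (Phi z p x ξ) := by
  unfold Phi
  rw [map_smul, map_sum]
  congr 1
  simp only [map_smul, Dop_mono, aF, Finset.smul_sum, Finset.sum_smul, ext0_update, ext0_val,
    smul_smul]
  rw [Finset.sum_comm]
  conv_rhs => rw [Finset.sum_comm]
  refine Finset.sum_congr rfl fun k _ => ?_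
  rw [← Fintype.sum_prod_type', ← Fintype.sum_prod_type']
  have hinv : Function.Involutive (fun bm : (Fin p → Fin n) × Fin n =>
      ((Function.update bm.1 k bm.2, bm.1 k) : (Fin p → Fin n) × Fin n)) := by
    rintro ⟨b, m⟩
    simp
  refine Fintype.sum_equiv hinv.toPerm _ _ ?_
  rintro ⟨b, m⟩
  simp [mul_comm]

theorem Phi_nabla (z : Fin n) (p : ℕ) (x : Pt n) (Γ : Fin n → Fin n → Fin n → Pt n → ℝ)
    (i : Fin n) (ξ : Form n) :
    Phi z p x (nabla Γ i p ξ) = Phi z p x (pdF i ξ)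
      - Dop (fun m a => Γ m i a x) (Phi z p x ξ) := by
  rw [← Phi_aF z p x (fun m a => Γ m i a) ξ]
  unfold Phi
  rw [← smul_sub, ← Finset.sum_sub_distrib]
  congr 1
  refine Finset.sum_congr rfl fun b _ => ?_
  rw [← sub_smul]
  rfl

theorem anti_perm (z : Fin n) (p : ℕ) (x : Pt n) (ξ : Form n) (hD : DependsOn p ξ)
    (hA : IsAnti p ξ) (σ : Equiv.Perm (Fin p)) : ∀ b : Fin p → Fin n,
    ξ (ext0 z p (b ∘ σ)) x = ((Equiv.Perm.sign σ : ℤ) : ℝ) * ξ (ext0 z p b) x := by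
  induction σ using Equiv.Perm.swap_induction_on with
  | one => intro b; simp
  | swap_mul f i j hij ih =>
    intro b
    have h1 : b ∘ ⇑(Equiv.swap i j * f) = (b ∘ Equiv.swap i j) ∘ f := rfl
    rw [h1, ih]
    have h2 : ξ (ext0 z p (b ∘ Equiv.swap i j)) x = - ξ (ext0 z p b) x := by
      rw [← hA (ext0 z p b) i j i.2 j.2 (fun h => hij (Fin.ext h)) x]
      refine congrFun (hD _ _ ?_) x
      intro t ht
      have : Equiv.swap (i : ℕ) (j : ℕ) t = ((Equiv.swap i j ⟨t, ht⟩ : Fin p) : ℕ) := by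
        simp only [Equiv.swap_apply_def, Fin.ext_iff]
        split_ifs <;> rfl
      simp only [this, ht, ext0, dif_pos, Function.comp, Fin.is_lt, Fin.eta]
    rw [h2, Equiv.Perm.sign_mul, Equiv.Perm.sign_swap hij]
    simp

/-- Component functional on the exterior algebra. -/
noncomputable def comp (a : ℕ → Fin n) : ExteriorAlgebra ℝ (Fin n → ℝ) →ₗ[ℝ] ℝ :=
  ExteriorAlgebra.liftAlternating (fun i =>
    (Matrix.detRowAlternating (n := Fin i) (R := ℝ)).compLinearMap
      (LinearMap.funLeft ℝ ℝ (fun c : Fin i => a (c : ℕ))))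

theorem comp_mono (a : ℕ → Fin n) (p : ℕ) (b : Fin p → Fin n) :
    comp a (mono p b) = ∑ σ : Equiv.Perm (Fin p), ((Equiv.Perm.sign σ : ℤ) : ℝ) *
      (if b ∘ σ = (fun i : Fin p => a i) then 1 else 0) := by
  unfold comp mono
  rw [ExteriorAlgebra.liftAlternating_apply_ιMulti]
  have : (Matrix.detRowAlternating.compLinearMap
      (LinearMap.funLeft ℝ ℝ (fun c : Fin p => a (c : ℕ))))
        (fun i => (Pi.single (b i) (1 : ℝ) : Fin n → ℝ))
      = Matrix.det (Matrix.of (fun i j : Fin p => (Pi.single (b i) (1 : ℝ) : Fin n → ℝ) (a j))) := rfl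
  rw [this, Matrix.det_apply]
  refine Finset.sum_congr rfl fun σ _ => ?_
  rw [Units.smul_def, ← Int.cast_smul_eq_zsmul ℝ, smul_eq_mul]
  congr 1
  simp only [Matrix.of_apply, Pi.single_apply]
  rw [Finset.prod_ite_zero]
  simp [funext_iff, eq_comm]

theorem comp_Phi (z : Fin n) (a : ℕ → Fin n) (p : ℕ) (x : Pt n) (ξ : Form n)
    (hD : DependsOn p ξ) (hA : IsAnti p ξ) : comp a (Phi z p x ξ) = ξ a x := by
  unfold Phi
  simp only [map_smul, map_sum, comp_mono, smul_eq_mul, Finset.mul_sum]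
  rw [Finset.sum_comm]
  have : ∀ σ : Equiv.Perm (Fin p), ∑ b : Fin p → Fin n, (p.factorial : ℝ)⁻¹ *
      (ξ (ext0 z p b) x * (((Equiv.Perm.sign σ : ℤ) : ℝ) *
      (if b ∘ σ = (fun i : Fin p => a i) then 1 else 0))) = (p.factorial : ℝ)⁻¹ * ξ a x := by
    intro σ
    rw [Finset.sum_eq_single ((fun i : Fin p => a i) ∘ (σ⁻¹ : Equiv.Perm (Fin p)))]
    · have h1 : ((fun i : Fin p => a i) ∘ (σ⁻¹ : Equiv.Perm (Fin p))) ∘ σ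
        = (fun i : Fin p => a i) := by funext i; simp
      rw [if_pos h1, anti_perm z p x ξ hD hA, Equiv.Perm.sign_inv]
      have h2 : ξ (ext0 z p (fun i : Fin p => a i)) = ξ a := by
        apply hD; intro t ht; simp [ext0, ht]
      rw [h2]
      linear_combination ((p.factorial : ℝ)⁻¹ * ξ a x) * sign_sq p σ
    · intro b _ hb
      rw [if_neg]
      · simp
      · intro h; apply hb; rw [← h]; funext i; simp
    · simp
  rw [Finset.sum_congr rfl fun σ _ => this σ]
  simp only [Finset.sum_const, Finset.card_univ, Fintype.card_perm, Fintype.card_fin, nsmul_eq_mul]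
  have h2 : (p.factorial : ℝ) ≠ 0 := by positivity
  field_simp

theorem ctr_mono (m : Fin n) (p : ℕ) (b : Fin (p + 1) → Fin n) :
    ctr m (mono (p + 1) b) = ∑ k : Fin (p + 1),
      ((-1 : ℝ) ^ (k : ℕ) * (if b k = m then 1 else 0)) • mono p (k.removeNth b) := by
  induction p with
  | zero =>
    rw [← Fin.cons_self_tail b, mono_cons, ctr_eb_mul, mono_zero, ctr_one]
    rw [Fin.sum_univ_succ]
    simp [mono_zero]
  | succ p ih =>
    rw [← Fin.cons_self_tail b]
    generalize Fin.tail b = c'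
    generalize b 0 = c0
    rw [mono_cons, ctr_eb_mul, ih]
    conv_rhs => rw [Fin.sum_univ_succ]
    rw [sub_eq_add_neg]
    congr 1
    · simp
    · rw [Finset.mul_sum, ← Finset.sum_neg_distrib]
      refine Finset.sum_congr rfl fun k _ => ?_
      have : (k.succ.removeNth (Fin.cons c0 c' : Fin (p + 2) → Fin n) : Fin (p+1) → Fin n)
          = Fin.cons c0 (k.removeNth c') := by
        funext t
        refine Fin.cases ?_ (fun t => ?_) t <;> simp [Fin.removeNth]
      rw [this, mono_cons]
      split_ifs <;> simp_all [pow_succ]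

theorem Phi_intr (z m : Fin n) (p : ℕ) (x : Pt n) (ξ : Form n)
    (hD : DependsOn (p + 1) ξ) (hA : IsAnti (p + 1) ξ) :
    Phi z p x (intr (p + 1) m ξ) = ctr m (Phi z (p + 1) x ξ) := by
  have key : ∀ k : Fin (p + 1), ∑ b : Fin (p + 1) → Fin n, (ξ (ext0 z (p + 1) b) x *
      ((-1 : ℝ) ^ (k : ℕ) * (if b k = m then 1 else 0))) • mono p (k.removeNth b)
      = ∑ b : Fin p → Fin n, intr (p + 1) m ξ (ext0 z p b) x • mono p b := by
    intro k
    rw [← (Fin.insertNthEquiv (fun _ => Fin n) k).sum_comp, Fintype.sum_prod_type, Finset.sum_comm]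
    refine Finset.sum_congr rfl fun b _ => ?_
    rw [Finset.sum_eq_single m]
    · have h0 : (Fin.insertNthEquiv (fun _ => Fin n) k) (m, b)
        = (k.insertNth m b : Fin (p + 1) → Fin n) := rfl
      rw [h0]
      have h1 : ξ (ext0 z (p + 1) (k.insertNth m b : Fin (p + 1) → Fin n)) x
          = (-1 : ℝ) ^ (k : ℕ) * ξ (ext0 z (p + 1) (Fin.cons m b)) x := by
        rw [← Fin.cons_comp_cycleRange, anti_perm z _ x ξ hD hA, Fin.sign_cycleRange]
        simp
      have h2 : intr (p + 1) m ξ (ext0 z p b) x = ξ (ext0 z (p + 1) (Fin.cons m b)) x := by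
        simp only [intr, Nat.add_eq_zero_iff, one_ne_zero, and_false, if_false]
        refine congrFun (hD _ _ ?_) x
        intro t ht
        cases t with
        | zero => simp [ext0]
        | succ t =>
          have h3 : t < p := by omega
          have h4 : (⟨t + 1, ht⟩ : Fin (p + 1)) = Fin.succ ⟨t, h3⟩ := rfl
          simp only [ext0, ht, h4, dif_pos, Fin.cons_succ]
          simp [h3]
      rw [h1, h2]
      simp only [Fin.insertNth_apply_same, if_true, Fin.removeNth_insertNth]
      congr 1
      have : (-1 : ℝ) ^ (k : ℕ) * (-1 : ℝ) ^ (k : ℕ) = 1 := by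
        rw [← mul_pow]; simp
      linear_combination (ξ (ext0 z (p + 1) (Fin.cons m b)) x) * this
    · intro c _ hc
      have h0 : (Fin.insertNthEquiv (fun _ => Fin n) k) (c, b)
        = (k.insertNth c b : Fin (p + 1) → Fin n) := rfl
      rw [h0, Fin.insertNth_apply_same, if_neg hc]
      simp
    · simp
  unfold Phi
  rw [map_smul, map_sum]
  simp only [map_smul, ctr_mono, Finset.smul_sum (s := (Finset.univ : Finset (Fin (p+1)))), smul_smul]
  rw [Finset.sum_comm (s := (Finset.univ : Finset (Fin (p + 1) → Fin n))),
    Finset.sum_congr rfl fun k _ => key k]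
  simp only [Finset.sum_const, Finset.card_univ, Fintype.card_fin]
  rw [← Nat.cast_smul_eq_nsmul ℝ, smul_smul, Nat.factorial_succ]
  congr 1
  push_cast
  have h1 : (p : ℝ) + 1 ≠ 0 := by positivity
  have h2 : (p.factorial : ℝ) ≠ 0 := by positivity
  field_simp

theorem pd_add (k : Fin n) {f g : Pt n → ℝ} {x : Pt n} (hf : DifferentiableAt ℝ f x)
    (hg : DifferentiableAt ℝ g x) : pd k (fun y => f y + g y) x = pd k f x + pd k g x := by
  unfold pd
  rw [fderiv_fun_add hf hg]; rfl

theorem pd_sub (k : Fin n) {f g : Pt n → ℝ} {x : Pt n} (hf : DifferentiableAt ℝ f x)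
    (hg : DifferentiableAt ℝ g x) : pd k (fun y => f y - g y) x = pd k f x - pd k g x := by
  unfold pd
  rw [fderiv_fun_sub hf hg]; rfl

theorem pd_neg (k : Fin n) {f : Pt n → ℝ} {x : Pt n} :
    pd k (fun y => - f y) x = - pd k f x := by
  unfold pd
  rw [fderiv_fun_neg]; rfl

theorem pd_mul (k : Fin n) {f g : Pt n → ℝ} {x : Pt n} (hf : DifferentiableAt ℝ f x)
    (hg : DifferentiableAt ℝ g x) :
    pd k (fun y => f y * g y) x = pd k f x * g x + f x * pd k g x := by
  unfold pd
  rw [fderiv_fun_mul hf hg]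
  simp
  ring

theorem pd_const_mul (k : Fin n) {f : Pt n → ℝ} {x : Pt n} (hf : DifferentiableAt ℝ f x) (c : ℝ) :
    pd k (fun y => c * f y) x = c * pd k f x := by
  unfold pd
  rw [fderiv_const_mul hf]; rfl

theorem pd_sum {ι : Type*} (s : Finset ι) (k : Fin n) {f : ι → Pt n → ℝ} {x : Pt n}
    (hf : ∀ i ∈ s, DifferentiableAt ℝ (f i) x) :
    pd k (fun y => ∑ i ∈ s, f i y) x = ∑ i ∈ s, pd k (f i) x := by
  unfold pd
  rw [fderiv_fun_sum hf]; simp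

theorem smooth_pd {U : Set (Pt n)} (hU : IsOpen U) (k : Fin n) {f : Pt n → ℝ}
    (hf : ContDiffOn ℝ (⊤ : ℕ∞) f U) : ContDiffOn ℝ (⊤ : ℕ∞) (pd k f) U := by
  have h := ((contDiffOn_infty_iff_fderiv_of_isOpen hU).1 hf).2
  exact h.clm_apply contDiffOn_const

theorem smooth_diffAt {U : Set (Pt n)} (hU : IsOpen U) {f : Pt n → ℝ}
    (hf : ContDiffOn ℝ (⊤ : ℕ∞) f U) {x : Pt n} (hx : x ∈ U) : DifferentiableAt ℝ f x :=
  ((contDiffOn_infty_iff_fderiv_of_isOpen hU).1 hf).1.differentiableAt (hU.mem_nhds hx)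

theorem pd_comm {U : Set (Pt n)} (hU : IsOpen U) (i k : Fin n) {f : Pt n → ℝ}
    (hf : ContDiffOn ℝ (⊤ : ℕ∞) f U) {x : Pt n} (hx : x ∈ U) :
    pd i (pd k f) x = pd k (pd i f) x := by
  have h1 : ContDiffAt ℝ (⊤ : ℕ∞) f x := hf.contDiffAt (hU.mem_nhds hx)
  have hs : IsSymmSndFDerivAt ℝ f x := h1.isSymmSndFDerivAt (by
    rw [minSmoothness_of_isRCLikeNormedField]
    exact WithTop.coe_le_coe.2 le_top)
  have hd : DifferentiableAt ℝ (fderiv ℝ f) x := by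
    have h := ((contDiffOn_infty_iff_fderiv_of_isOpen hU).1 hf).2
    exact ((contDiffOn_infty_iff_fderiv_of_isOpen hU).1 h).1.differentiableAt (hU.mem_nhds hx)
  have hk : ∀ v w : Pt n, fderiv ℝ (fun y => fderiv ℝ f y v) x w = fderiv ℝ (fderiv ℝ f) x w v := by
    intro v w
    rw [fderiv_clm_apply hd (differentiableAt_const v)]
    simp
  unfold pd
  rw [hk, hk]
  exact hs.eq _ _

/-! ### Slot dependence -/

theorem dep_pdF {p : ℕ} {ξ : Form n} (k : Fin n) (h : DependsOn p ξ) : DependsOn p (pdF k ξ) := by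
  intro a b hab
  unfold pdF
  rw [h a b hab]

theorem dep_aF {p : ℕ} {ξ : Form n} (G : Fin n → Fin n → Pt n → ℝ) (h : DependsOn p ξ) :
    DependsOn p (aF G p ξ) := by
  intro a b hab
  funext x
  unfold aF
  refine Finset.sum_congr rfl fun k _ => Finset.sum_congr rfl fun m _ => ?_
  rw [hab k k.2]
  congr 1
  refine congrFun (h _ _ fun t ht => ?_) x
  simp only [hab t ht]

theorem nabla_eq (Γ : Fin n → Fin n → Fin n → Pt n → ℝ) (i : Fin n) (p : ℕ) (ξ : Form n) :
    nabla Γ i p ξ = pdF i ξ - aF (fun m a => Γ m i a) p ξ := rfl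

theorem dep_nabla {p : ℕ} {ξ : Form n} (Γ : Fin n → Fin n → Fin n → Pt n → ℝ) (i : Fin n)
    (h : DependsOn p ξ) : DependsOn p (nabla Γ i p ξ) := by
  intro a b hab
  rw [nabla_eq, Pi.sub_apply, Pi.sub_apply, dep_pdF i h a b hab, dep_aF _ h a b hab]

theorem dep_extd {p : ℕ} {ξ : Form n} (h : DependsOn p ξ) : DependsOn (p + 1) (extd p ξ) := by
  intro a b hab
  funext x
  unfold extd
  refine Finset.sum_congr rfl fun k _ => ?_
  rw [hab k k.2]
  congr 2
  refine h _ _ fun t ht => ?_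
  split_ifs
  · exact hab t (by omega)
  · exact hab (t + 1) (by omega)

theorem dep_wedge {p q : ℕ} {ξ η : Form n} (h : DependsOn p ξ) (h' : DependsOn q η) :
    DependsOn (p + q) (wedge p q ξ η) := by
  intro a b hab
  funext x
  unfold wedge
  congr 1
  refine Finset.sum_congr rfl fun σ _ => ?_
  congr 1
  · congr 1
    refine congrFun (h _ _ fun t ht => ?_) x
    simp only [ht, dif_pos]
    exact hab _ (Fin.is_lt _)
  · refine congrFun (h' _ _ fun t ht => ?_) x
    simp only [ht, dif_pos]
    exact hab _ (Fin.is_lt _)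

theorem dep_intr {p : ℕ} {ξ : Form n} (m : Fin n) (h : DependsOn (p + 1) ξ) :
    DependsOn p (intr (p + 1) m ξ) := by
  intro a b hab
  funext x
  simp only [intr, Nat.add_eq_zero_iff, one_ne_zero, and_false, if_false]
  refine congrFun (h _ _ fun t ht => ?_) x
  split_ifs with h0
  · rfl
  · exact hab _ (by omega)

theorem dep_Hform (ω : Fin n → Fin n → Pt n → ℝ)
    (Γ : Fin n → Fin n → Fin n → Pt n → ℝ) (i j : Fin n) : DependsOn 2 (Hform ω Γ i j) := by
  intro a b hab
  unfold Hform
  rw [hab 0 (by norm_num), hab 1 (by norm_num)]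

theorem Qcorr_apply (ω : Fin n → Fin n → Pt n → ℝ)
    (Γ : Fin n → Fin n → Fin n → Pt n → ℝ) (p q : ℕ) (ξ η : Form n) (a : ℕ → Fin n) (x : Pt n) :
    Qcorr ω Γ p q ξ η a x = 2⁻¹ * ∑ i, ∑ j, ω i j x *
      wedge p q (nabla Γ i p ξ) (nabla Γ j q η) a x := by
  simp [Qcorr, fmul, Finset.sum_apply]

theorem dep_Qcorr (ω : Fin n → Fin n → Pt n → ℝ)
    (Γ : Fin n → Fin n → Fin n → Pt n → ℝ) {p q : ℕ} {ξ η : Form n}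
    (h : DependsOn p ξ) (h' : DependsOn q η) : DependsOn (p + q) (Qcorr ω Γ p q ξ η) := by
  intro a b hab
  funext x
  simp only [Qcorr_apply]
  congr 1
  refine Finset.sum_congr rfl fun i _ => Finset.sum_congr rfl fun j _ => ?_
  rw [dep_wedge (dep_nabla Γ i h) (dep_nabla Γ j h') a b hab]

/-! ### Antisymmetry -/

theorem anti_pdF {p : ℕ} {ξ : Form n} (k : Fin n) (h : IsAnti p ξ) : IsAnti p (pdF k ξ) := by
  intro a i j hi hj hij x
  unfold pdF
  have : ξ (fun t => a (Equiv.swap i j t)) = fun y => - ξ a y :=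
    funext fun y => h a i j hi hj hij y
  rw [this, pd_neg]

theorem anti_wedge {p q : ℕ} {ξ η : Form n} (h : DependsOn p ξ) (h' : DependsOn q η) :
    IsAnti (p + q) (wedge p q ξ η) := by
  intro a i j hi hj hij x
  unfold wedge
  rw [← mul_neg, ← Finset.sum_neg_distrib]
  congr 1
  refine Fintype.sum_equiv (Equiv.mulLeft (Equiv.swap (⟨i, hi⟩ : Fin (p + q)) ⟨j, hj⟩)) _ _ ?_
  intro σ
  have hs : ∀ t : Fin (p + q), Equiv.swap i j (t : ℕ)
      = ((Equiv.swap (⟨i, hi⟩ : Fin (p + q)) ⟨j, hj⟩ t : Fin (p + q)) : ℕ) := by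
    intro t
    simp only [Equiv.swap_apply_def, Fin.ext_iff]
    split_ifs <;> rfl
  have hne : (⟨i, hi⟩ : Fin (p + q)) ≠ ⟨j, hj⟩ := fun h => hij (by simpa using h)
  rw [Equiv.coe_mulLeft, Equiv.Perm.sign_mul, Equiv.Perm.sign_swap hne]
  rw [← neg_mul, ← neg_mul]
  congr 1
  · congr 1
    · simp
    · refine congrFun (h _ _ fun t ht => ?_) x
      simp only [ht, dif_pos, hs]; rfl
  · refine congrFun (h' _ _ fun t ht => ?_) x
    simp only [ht, dif_pos, hs]; rfl

theorem anti_Qcorr (ω : Fin n → Fin n → Pt n → ℝ)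
    (Γ : Fin n → Fin n → Fin n → Pt n → ℝ) {p q : ℕ} {ξ η : Form n}
    (h : DependsOn p ξ) (h' : DependsOn q η) : IsAnti (p + q) (Qcorr ω Γ p q ξ η) := by
  intro a i j hi hj hij x
  simp only [Qcorr_apply]
  rw [← mul_neg, ← Finset.sum_neg_distrib]
  congr 1
  refine Finset.sum_congr rfl fun k _ => ?_
  rw [← Finset.sum_neg_distrib]
  refine Finset.sum_congr rfl fun l _ => ?_
  rw [anti_wedge (dep_nabla Γ k h) (dep_nabla Γ l h') a i j hi hj hij x, mul_neg]

/-! ### Components of an exterior derivative -/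

theorem comp_mono_det (a : ℕ → Fin n) (p : ℕ) (b : Fin p → Fin n) :
    comp a (mono p b) = Matrix.det (Matrix.of
      (fun i j : Fin p => (Pi.single (b i) (1 : ℝ) : Fin n → ℝ) (a j))) := by
  unfold comp mono
  rw [ExteriorAlgebra.liftAlternating_apply_ιMulti]
  rfl

theorem comp_eb_mono (a : ℕ → Fin n) (p : ℕ) (c : Fin n) (b : Fin p → Fin n) :
    comp a (eb c * mono p b) = ∑ k : Fin (p + 1), (-1 : ℝ) ^ (k : ℕ) *
      (if a k = c then 1 else 0) * comp (fun t => if t < (k : ℕ) then a t else a (t + 1))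
        (mono p b) := by
  rw [← mono_cons, comp_mono_det, Matrix.det_succ_row_zero]
  refine Finset.sum_congr rfl fun k _ => ?_
  congr 1
  · congr 1
    simp [Pi.single_apply]
  · rw [comp_mono_det]
    congr 1
    ext i j
    simp only [Matrix.submatrix_apply, Matrix.of_apply, Fin.cons_succ]
    congr 1
    by_cases h : (j : ℕ) < (k : ℕ)
    · rw [Fin.succAbove_of_castSucc_lt _ _ (by exact h), if_pos h]; rfl
    · rw [Fin.succAbove_of_le_castSucc _ _ (by exact not_lt.mp h), if_neg h]; rfl

theorem comp_eb_Phi (z : Fin n) (a : ℕ → Fin n) (p : ℕ) (c : Fin n) (x : Pt n) (ξ : Form n)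
    (hD : DependsOn p ξ) (hA : IsAnti p ξ) :
    comp a (eb c * Phi z p x ξ) = ∑ k : Fin (p + 1), (-1 : ℝ) ^ (k : ℕ) *
      (if a k = c then 1 else 0) * ξ (fun t => if t < (k : ℕ) then a t else a (t + 1)) x := by
  simp only [← comp_Phi z _ p x ξ hD hA]
  unfold Phi
  simp only [mul_smul_comm, Finset.mul_sum, map_smul, map_sum, comp_eb_mono, smul_eq_mul]
  rw [Finset.sum_comm]
  refine Finset.sum_congr rfl fun b _ => Finset.sum_congr rfl fun k _ => ?_
  ring

theorem comp_extd (z : Fin n) (a : ℕ → Fin n) (p : ℕ) (x : Pt n) (ξ : Form n)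
    (hD : DependsOn p ξ) (hA : IsAnti p ξ) :
    extd p ξ a x = comp a (∑ k, eb k * Phi z p x (pdF k ξ)) := by
  rw [map_sum, Finset.sum_congr rfl fun c _ =>
    comp_eb_Phi z a p c x _ (dep_pdF c hD) (anti_pdF c hA), Finset.sum_comm]
  unfold extd
  refine Finset.sum_congr rfl fun k _ => ?_
  rw [Finset.sum_eq_single (a k)]
  · simp [pdF]
  · intro c _ hc
    simp [hc.symm]
  · simp

/-! ### Derivatives of forms -/

theorem pdF_wedge (k : Fin n) (p q : ℕ) (x : Pt n) (ξ η : Form n)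
    (hξ : ∀ a, DifferentiableAt ℝ (ξ a) x) (hη : ∀ a, DifferentiableAt ℝ (η a) x)
    (a : ℕ → Fin n) :
    pdF k (wedge p q ξ η) a x = wedge p q (pdF k ξ) η a x + wedge p q ξ (pdF k η) a x := by
  unfold pdF wedge
  rw [pd_const_mul, ← mul_add, pd_sum, ← Finset.sum_add_distrib]
  · congr 1
    refine Finset.sum_congr rfl fun σ _ => ?_
    rw [pd_mul _ ((hξ _).const_mul _) (hη _), pd_const_mul _ (hξ _)]
  · exact fun σ _ => ((hξ _).const_mul _).mul (hη _)
  · exact DifferentiableAt.fun_sum fun σ _ => ((hξ _).const_mul _).mul (hη _)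

theorem diff_wedge (p q : ℕ) (x : Pt n) (ξ η : Form n)
    (hξ : ∀ a, DifferentiableAt ℝ (ξ a) x) (hη : ∀ a, DifferentiableAt ℝ (η a) x)
    (a : ℕ → Fin n) : DifferentiableAt ℝ (wedge p q ξ η a) x := by
  unfold wedge
  exact (DifferentiableAt.fun_sum fun σ _ => ((hξ _).const_mul _).mul (hη _)).const_mul _

theorem pdF_extd {U : Set (Pt n)} (hU : IsOpen U) (i : Fin n) (p : ℕ) {x : Pt n} (hx : x ∈ U)
    (ξ : Form n) (hξ : SmoothOn U ξ) (a : ℕ → Fin n) :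
    pdF i (extd p ξ) a x = extd p (pdF i ξ) a x := by
  have hd : ∀ k b, DifferentiableAt ℝ (pd k (ξ b)) x :=
    fun k b => smooth_diffAt hU (smooth_pd hU k (hξ b)) hx
  unfold pdF extd
  rw [pd_sum _ _ fun k _ => (hd _ _).const_mul _]
  refine Finset.sum_congr rfl fun k _ => ?_
  rw [pd_const_mul _ (hd _ _), pd_comm hU i _ (hξ _) hx]

theorem smooth_nabla {U : Set (Pt n)} (hU : IsOpen U) (Γ : Fin n → Fin n → Fin n → Pt n → ℝ)
    (hΓ : ∀ i j k, ContDiffOn ℝ (⊤ : ℕ∞) (Γ i j k) U) (i : Fin n) (p : ℕ)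
    (ξ : Form n) (hξ : SmoothOn U ξ) : SmoothOn U (nabla Γ i p ξ) := by
  intro a
  unfold nabla
  exact (smooth_pd hU i (hξ a)).sub (ContDiffOn.sum fun k _ => ContDiffOn.sum fun m _ =>
    (hΓ _ _ _).mul (hξ _))

theorem pdF_nabla {U : Set (Pt n)} (hU : IsOpen U) (Γ : Fin n → Fin n → Fin n → Pt n → ℝ)
    (hΓ : ∀ i j k, ContDiffOn ℝ (⊤ : ℕ∞) (Γ i j k) U) (k i : Fin n) (p : ℕ)
    (ξ : Form n) (hξ : SmoothOn U ξ) {x : Pt n} (hx : x ∈ U) (a : ℕ → Fin n) :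
    pdF k (nabla Γ i p ξ) a x = pdF k (pdF i ξ) a x
      - (aF (fun m a => pd k (Γ m i a)) p ξ a x + aF (fun m a => Γ m i a) p (pdF k ξ) a x) := by
  have hd : ∀ b, DifferentiableAt ℝ (ξ b) x := fun b => smooth_diffAt hU (hξ b) hx
  have hg : ∀ i j k, DifferentiableAt ℝ (Γ i j k) x := fun i j k => smooth_diffAt hU (hΓ i j k) hx
  have h2 : DifferentiableAt ℝ (pd i (ξ a)) x := smooth_diffAt hU (smooth_pd hU i (hξ a)) hx
  unfold pdF nabla aF
  rw [pd_sub _ h2 (DifferentiableAt.fun_sum fun k _ => DifferentiableAt.fun_sum fun m _ =>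
    (hg _ _ _).fun_mul (hd _)), pd_sum _ _ (fun k _ => DifferentiableAt.fun_sum fun m _ =>
    (hg _ _ _).fun_mul (hd _)), ← Finset.sum_add_distrib]
  congr 1
  refine Finset.sum_congr rfl fun l _ => ?_
  rw [pd_sum _ _ fun m _ => (hg _ _ _).fun_mul (hd _), ← Finset.sum_add_distrib]
  refine Finset.sum_congr rfl fun m _ => ?_
  rw [pd_mul _ (hg _ _ _) (hd _)]

theorem pdF_Qcorr {U : Set (Pt n)} (hU : IsOpen U) (ω : Fin n → Fin n → Pt n → ℝ)
    (hω : ∀ i j, ContDiffOn ℝ (⊤ : ℕ∞) (ω i j) U)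
    (Γ : Fin n → Fin n → Fin n → Pt n → ℝ)
    (hΓ : ∀ i j k, ContDiffOn ℝ (⊤ : ℕ∞) (Γ i j k) U) (k : Fin n) (p q : ℕ)
    (ξ η : Form n) (hξ : SmoothOn U ξ) (hη : SmoothOn U η) {x : Pt n} (hx : x ∈ U)
    (a : ℕ → Fin n) :
    pdF k (Qcorr ω Γ p q ξ η) a x = 2⁻¹ * ∑ i, ∑ j,
      (pd k (ω i j) x * wedge p q (nabla Γ i p ξ) (nabla Γ j q η) a x
        + ω i j x * (wedge p q (pdF k (nabla Γ i p ξ)) (nabla Γ j q η) a x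
          + wedge p q (nabla Γ i p ξ) (pdF k (nabla Γ j q η)) a x)) := by
  have h1 : ∀ i b, DifferentiableAt ℝ (nabla Γ i p ξ b) x :=
    fun i b => smooth_diffAt hU (smooth_nabla hU Γ hΓ i p ξ hξ b) hx
  have h2 : ∀ i b, DifferentiableAt ℝ (nabla Γ i q η b) x :=
    fun i b => smooth_diffAt hU (smooth_nabla hU Γ hΓ i q η hη b) hx
  have h3 : ∀ i j, DifferentiableAt ℝ (wedge p q (nabla Γ i p ξ) (nabla Γ j q η) a) x :=
    fun i j => diff_wedge p q x _ _ (h1 i) (h2 j) a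
  have h4 : ∀ i j, DifferentiableAt ℝ (ω i j) x := fun i j => smooth_diffAt hU (hω i j) hx
  have h5 : Qcorr ω Γ p q ξ η a = fun x => 2⁻¹ * ∑ i, ∑ j, ω i j x *
      wedge p q (nabla Γ i p ξ) (nabla Γ j q η) a x := funext fun x => Qcorr_apply _ _ _ _ _ _ _ _
  show pd k (Qcorr ω Γ p q ξ η a) x = _
  rw [h5, pd_const_mul _ (DifferentiableAt.fun_sum fun i _ => DifferentiableAt.fun_sum fun j _ =>
    (h4 i j).fun_mul (h3 i j)), pd_sum _ _ fun i _ => DifferentiableAt.fun_sum fun j _ =>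
    (h4 i j).fun_mul (h3 i j)]
  congr 1
  refine Finset.sum_congr rfl fun i _ => ?_
  rw [pd_sum _ _ fun j _ => (h4 i j).fun_mul (h3 i j)]
  refine Finset.sum_congr rfl fun j _ => ?_
  rw [pd_mul _ (h4 i j) (h3 i j), ← pdF_wedge k p q x _ _ (h1 i) (h2 j) a]
  rfl

theorem Phi_congr (z : Fin n) (p : ℕ) (x : Pt n) {ξ η : Form n} (h : ∀ a, ξ a x = η a x) :
    Phi z p x ξ = Phi z p x η := by
  unfold Phi
  simp only [h]

theorem Phi_add (z : Fin n) (p : ℕ) (x : Pt n) (ξ η : Form n) :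
    Phi z p x (fun a y => ξ a y + η a y) = Phi z p x ξ + Phi z p x η := by
  unfold Phi
  simp only [add_smul, Finset.sum_add_distrib, smul_add]

theorem Phi_sub (z : Fin n) (p : ℕ) (x : Pt n) (ξ η : Form n) :
    Phi z p x (fun a y => ξ a y - η a y) = Phi z p x ξ - Phi z p x η := by
  unfold Phi
  simp only [sub_smul, Finset.sum_sub_distrib, smul_sub]

theorem Phi_smul (z : Fin n) (p : ℕ) (x : Pt n) (c : ℝ) (ξ : Form n) :
    Phi z p x (fun a y => c * ξ a y) = c • Phi z p x ξ := by
  unfold Phi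
  simp only [mul_smul, ← Finset.smul_sum]
  rw [smul_comm]

theorem Phi_sum (z : Fin n) (p : ℕ) (x : Pt n) (ξ : Fin n → Form n) :
    Phi z p x (fun a y => ∑ i, ξ i a y) = ∑ i, Phi z p x (ξ i) := by
  unfold Phi
  simp only [Finset.sum_smul, ← Finset.smul_sum]
  rw [Finset.sum_comm]

theorem onef_Phi (z : Fin n) (g : Fin n → ℝ) (p : ℕ) (x : Pt n) (ξ : Form n) :
    Phi z p x ξ * onef g = (-1 : ℝ) ^ p • (onef g * Phi z p x ξ) := by
  unfold onef
  simp only [Finset.mul_sum, Finset.sum_mul, smul_mul_assoc, mul_smul_comm, eb_Phi,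
    Finset.smul_sum]
  refine Finset.sum_congr rfl fun b _ => ?_
  simp only [smul_smul]
  congr 1
  have : (-1 : ℝ) ^ p * (-1 : ℝ) ^ p = 1 := by
    rw [← mul_pow]; simp
  linear_combination (- g b) * this

theorem neg_one_pow_sq (p : ℕ) : (-1 : ℝ) ^ p * (-1 : ℝ) ^ p = 1 := by
  rw [← mul_pow]; simp

theorem onef_onef_Phi (z : Fin n) (g h : Fin n → ℝ) (p : ℕ) (x : Pt n) (ξ : Form n) :
    Phi z p x ξ * (onef g * onef h) = onef g * onef h * Phi z p x ξ := by
  rw [← mul_assoc, onef_Phi, smul_mul_assoc, mul_assoc, onef_Phi, mul_smul_comm, smul_smul,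
    neg_one_pow_sq, one_smul, mul_assoc]

theorem eb_eq_onef (k : Fin n) : eb k = onef (fun a => if a = k then (1 : ℝ) else 0) := by
  simp [onef]

/-- Connection one-form `θ_i^m = Γ^m_{ia} dx^a`. -/
noncomputable def th (Γ : Fin n → Fin n → Fin n → Pt n → ℝ) (x : Pt n) (i m : Fin n) :
    ExteriorAlgebra ℝ (Fin n → ℝ) := onef (fun a => Γ m i a x)

/-- Curvature-type two-form `F_i^m`. -/
noncomputable def Ff (Γ : Fin n → Fin n → Fin n → Pt n → ℝ) (x : Pt n) (i m : Fin n) :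
    ExteriorAlgebra ℝ (Fin n → ℝ) :=
  ∑ k, th Γ x i k * th Γ x k m - ∑ k, eb k * onef (fun a => pd k (Γ m i a) x)

theorem Ff_Phi (Γ : Fin n → Fin n → Fin n → Pt n → ℝ) (i m : Fin n)
    (z : Fin n) (p : ℕ) (x : Pt n) (ξ : Form n) :
    Phi z p x ξ * Ff Γ x i m = Ff Γ x i m * Phi z p x ξ := by
  unfold Ff th
  rw [mul_sub, sub_mul, Finset.mul_sum, Finset.mul_sum, Finset.sum_mul, Finset.sum_mul]
  congr 1
  · exact Finset.sum_congr rfl fun k _ => onef_onef_Phi _ _ _ _ _ _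
  · refine Finset.sum_congr rfl fun k _ => ?_
    rw [eb_eq_onef]
    exact onef_onef_Phi _ _ _ _ _ _

theorem commutator {U : Set (Pt n)} (hU : IsOpen U) (Γ : Fin n → Fin n → Fin n → Pt n → ℝ)
    (hΓ : ∀ i j k, ContDiffOn ℝ (⊤ : ℕ∞) (Γ i j k) U) (z i : Fin n) (p : ℕ)
    (ξ : Form n) (hξ : SmoothOn U ξ) (hD : DependsOn p ξ) {x : Pt n} (hx : x ∈ U) :
    ∑ k, eb k * Phi z p x (pdF k (nabla Γ i p ξ)) - Phi z (p + 1) x (nabla Γ i (p + 1) (extd p ξ))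
      = ∑ k, th Γ x i k * Phi z p x (nabla Γ k p ξ)
        + ∑ m, Ff Γ x i m * ctr m (Phi z p x ξ) := by
  have h1 : ∀ k, Phi z p x (pdF k (nabla Γ i p ξ)) = Phi z p x (pdF k (pdF i ξ))
      - (Dop (fun m a => pd k (Γ m i a) x) (Phi z p x ξ)
        + Dop (fun m a => Γ m i a x) (Phi z p x (pdF k ξ))) := by
    intro k
    rw [Phi_congr z p x (η := fun a y => pdF k (pdF i ξ) a y
      - (fun a y => aF (fun m a => pd k (Γ m i a)) p ξ a y
        + aF (fun m a => Γ m i a) p (pdF k ξ) a y : Form n) a y)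
      (pdF_nabla hU Γ hΓ k i p ξ hξ hx), Phi_sub, Phi_add, Phi_aF, Phi_aF]
  have h2 : Phi z (p + 1) x (nabla Γ i (p + 1) (extd p ξ))
      = ∑ k, eb k * Phi z p x (pdF k (pdF i ξ))
        - ∑ k, (th Γ x i k * Phi z p x (pdF k ξ)
          + eb k * Dop (fun m a => Γ m i a x) (Phi z p x (pdF k ξ))) := by
    rw [Phi_nabla, Phi_congr z (p + 1) x (pdF_extd hU i p hx ξ hξ), Phi_extd z p x _ (dep_pdF i hD),
      Phi_extd z p x _ hD, map_sum]
    simp only [Dop_eb_mul, th]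
  have h3 : ∑ m, Ff Γ x i m * ctr m (Phi z p x ξ) =
      ∑ k, th Γ x i k * Dop (fun m a => Γ m k a x) (Phi z p x ξ)
        - ∑ k, eb k * Dop (fun m a => pd k (Γ m i a) x) (Phi z p x ξ) := by
    simp only [Ff, sub_mul, Finset.sum_sub_distrib, Finset.sum_mul, Dop_apply, Finset.mul_sum,
      mul_assoc]
    congr 1
    · rw [Finset.sum_comm]; rfl
    · rw [Finset.sum_comm]
  rw [h2, h3]
  simp only [h1, Phi_nabla, mul_sub, mul_add, Finset.sum_sub_distrib, Finset.sum_add_distrib]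
  abel

theorem sum_swap3 {E : Type*} [AddCommMonoid E] (f : Fin n → Fin n → Fin n → E) :
    ∑ i, ∑ j, ∑ k, f i j k = ∑ k, ∑ j, ∑ i, f i j k := by
  rw [Finset.sum_congr rfl fun i _ => Finset.sum_comm, Finset.sum_comm]
  refine Finset.sum_congr rfl fun k _ => ?_
  rw [Finset.sum_comm]

theorem alg_core {E : Type*} [Ring E] [Algebra ℝ E] (ε : ℝ) (hε : ε * ε = 1)
    (w : Fin n → Fin n → ℝ) (dw θ F : Fin n → Fin n → E)
    (N M dN Nd dM Md cX cY : Fin n → E)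
    (hN : ∀ i, dN i - Nd i = ∑ k, θ i k * N k + ∑ m, F i m * cX m)
    (hM : ∀ i, dM i - Md i = ∑ k, θ i k * M k + ∑ m, F i m * cY m)
    (hθ : ∀ i j k, N i * θ j k = ε • (θ j k * N i))
    (hF : ∀ i j k, N i * F j k = F j k * N i)
    (hpc : ∀ i j, dw i j + ∑ k, w k j • θ k i + ∑ k, w i k • θ k j = 0) :
    (∑ i, ∑ j, (dw i j * (N i * M j) + w i j • (dN i * M j) + ε • w i j • (N i * dM j)))
      - ∑ i, ∑ j, w i j • (Nd i * M j) - ε • ∑ i, ∑ j, w i j • (N i * Md j)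
    = ∑ i, ∑ j, ∑ s, w s j • (F s i * cX i * M j)
      + ε • ∑ i, ∑ j, ∑ s, w i s • (F s j * N i * cY j) := by
  have e1 : (∑ i, ∑ j, (dw i j * (N i * M j) + w i j • (dN i * M j) + ε • w i j • (N i * dM j)))
      - ∑ i, ∑ j, w i j • (Nd i * M j) - ε • ∑ i, ∑ j, w i j • (N i * Md j)
      = ∑ i, ∑ j, (dw i j * (N i * M j) + w i j • ((dN i - Nd i) * M j)
        + ε • w i j • (N i * (dM j - Md j))) := by
    simp only [Finset.smul_sum, ← Finset.sum_sub_distrib, sub_mul, mul_sub, smul_sub]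
    refine Finset.sum_congr rfl fun i _ => Finset.sum_congr rfl fun j _ => ?_
    abel
  rw [e1]
  have e2 : ∀ i j, ε • w i j • (N i * (dM j - Md j))
      = ∑ k, w i j • (θ j k * (N i * M k)) + ε • ∑ m, w i j • (F j m * N i * cY m) := by
    intro i j
    rw [hM, mul_add, Finset.mul_sum, Finset.mul_sum, smul_add, smul_add]
    simp only [Finset.smul_sum]
    congr 1
    · refine Finset.sum_congr rfl fun k _ => ?_
      rw [← mul_assoc, hθ, smul_mul_assoc, mul_assoc, smul_comm (w i j) ε, smul_smul, hε, one_smul]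
    · refine Finset.sum_congr rfl fun k _ => ?_
      rw [← mul_assoc, hF]
  have e3 : ∀ i j, w i j • ((dN i - Nd i) * M j)
      = ∑ k, w i j • (θ i k * (N k * M j)) + ∑ m, w i j • (F i m * cX m * M j) := by
    intro i j
    rw [hN, add_mul, Finset.sum_mul, Finset.sum_mul, smul_add, Finset.smul_sum, Finset.smul_sum]
    simp only [mul_assoc]
  simp only [e2, e3, Finset.sum_add_distrib, ← Finset.smul_sum (r := ε)]
  have z0 : (∑ i, ∑ j, dw i j * (N i * M j)) + (∑ i, ∑ j, ∑ k, w i j • (θ i k * (N k * M j)))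
      + (∑ i, ∑ j, ∑ k, w i j • (θ j k * (N i * M k))) = 0 := by
    have : ∀ i j, dw i j * (N i * M j) + ∑ k, w k j • (θ k i * (N i * M j))
        + ∑ k, w i k • (θ k j * (N i * M j)) = 0 := by
      intro i j
      have h := congrArg (fun t => t * (N i * M j)) (hpc i j)
      simpa only [add_mul, Finset.sum_mul, smul_mul_assoc, zero_mul] using h
    rw [sum_swap3 (fun i j k => w i j • (θ i k * (N k * M j))),
      Finset.sum_congr rfl (fun i _ => Finset.sum_comm
        (f := fun j k => w i j • (θ j k * (N i * M k)))),
      ← Finset.sum_add_distrib, ← Finset.sum_add_distrib]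
    refine Finset.sum_eq_zero fun i _ => ?_
    rw [← Finset.sum_add_distrib, ← Finset.sum_add_distrib]
    exact Finset.sum_eq_zero fun j _ => this i j
  have z1 : (∑ i, ∑ j, ∑ m, w i j • (F i m * cX m * M j))
      = ∑ i, ∑ j, ∑ s, w s j • (F s i * cX i * M j) := sum_swap3 _
  have z2 : (∑ i, ∑ j, ∑ m, w i j • (F j m * N i * cY m))
      = ∑ i, ∑ j, ∑ s, w i s • (F s j * N i * cY j) :=
    Finset.sum_congr rfl fun i _ => Finset.sum_comm
  rw [← z1, ← z2]
  rw [← sub_eq_zero, ← z0]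
  abel

theorem Phi_two (z : Fin n) (x : Pt n) (ξ : Form n) (f : Fin n → Fin n → ℝ)
    (h : ∀ a, ξ a x = f (a 0) (a 1)) :
    Phi z 2 x ξ = (2⁻¹ : ℝ) • ∑ i, ∑ j, f i j • (eb i * eb j) := by
  unfold Phi
  congr 1
  rw [← Fintype.sum_prod_type']
  refine Fintype.sum_equiv (finTwoArrowEquiv (Fin n)) _ _ fun b => ?_
  rw [h, mono_eq_prod]
  simp [ext0, List.ofFn_succ]

theorem Ff_expand (Γ : Fin n → Fin n → Fin n → Pt n → ℝ) (x : Pt n) (s j : Fin n) :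
    Ff Γ x s j = ∑ a, ∑ b, ((∑ k, Γ k s a x * Γ j k b x) - pd a (Γ j s b) x) • (eb a * eb b) := by
  unfold Ff th onef
  simp only [sub_smul, Finset.sum_sub_distrib, Finset.sum_smul]
  congr 1
  · rw [Finset.sum_congr rfl fun a _ => Finset.sum_comm, Finset.sum_comm]
    refine Finset.sum_congr rfl fun k _ => ?_
    simp only [Finset.sum_mul, Finset.mul_sum, smul_mul_assoc, mul_smul_comm, smul_smul]
    rw [Finset.sum_comm]
    simp only [Finset.smul_sum, smul_smul, mul_comm]
  · simp only [Finset.mul_sum, mul_smul_comm]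

theorem Phi_Hform {U : Set (Pt n)} (hU : IsOpen U) (ω : Fin n → Fin n → Pt n → ℝ)
    (Γ : Fin n → Fin n → Fin n → Pt n → ℝ)
    (hΓ : ∀ i j k, ContDiffOn ℝ (⊤ : ℕ∞) (Γ i j k) U) (z i j : Fin n) {x : Pt n} (hx : x ∈ U) :
    Phi z 2 x (Hform ω Γ i j) = (2⁻¹ : ℝ) • ∑ s, ω i s x • Ff Γ x s j := by
  have hg : ∀ i j k, DifferentiableAt ℝ (Γ i j k) x := fun i j k => smooth_diffAt hU (hΓ i j k) hx
  set g : Fin n → Fin n → Fin n → ℝ := fun s a b =>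
    (∑ k, Γ k s a x * Γ j k b x) - pd a (Γ j s b) x with hgdef
  have hT : ∀ s a b, pd s (Tor Γ j a b) x = pd s (Γ j a b) x - pd s (Γ j b a) x := by
    intro s a b
    exact pd_sub _ (hg _ _ _) (hg _ _ _)
  have h1 : ∀ s a b, (covT Γ j b a s x - 2 * Rc Γ j b a s x)
      - (covT Γ j a b s x - 2 * Rc Γ j a b s x) = 2 * (g s a b - g s b a) := by
    intro s a b
    simp only [covT, Rc, hT, hgdef, Tor, mul_sub, Finset.sum_sub_distrib]
    simp only [mul_comm (Γ j s _ x)]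
    ring
  rw [Phi_two z x _ (fun a b => 2⁻¹ * ∑ s, ω i s x * (g s a b - g s b a))]
  · congr 1
    have h2 : ∀ s, Ff Γ x s j = (2⁻¹ : ℝ) • ∑ a, ∑ b, (g s a b - g s b a) • (eb a * eb b) := by
      intro s
      have h3 : ∑ a, ∑ b, g s b a • (eb a * eb b) = - ∑ a, ∑ b, g s a b • (eb a * eb b) := by
        rw [Finset.sum_comm, ← Finset.sum_neg_distrib]
        refine Finset.sum_congr rfl fun a _ => ?_
        rw [← Finset.sum_neg_distrib]
        refine Finset.sum_congr rfl fun b _ => ?_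
        rw [eb_anti b a, smul_neg]
      simp only [sub_smul, Finset.sum_sub_distrib]
      rw [h3, sub_neg_eq_add, ← two_smul ℝ, smul_smul, Ff_expand]
      norm_num
      rfl
    simp only [h2, Finset.smul_sum, smul_smul, Finset.mul_sum, Finset.sum_smul]
    rw [Finset.sum_congr rfl fun a _ => Finset.sum_comm, Finset.sum_comm]
    refine Finset.sum_congr rfl fun s _ => Finset.sum_congr rfl fun a _ =>
      Finset.sum_congr rfl fun b _ => ?_
    congr 1
    ring
  · intro a
    unfold Hform
    simp only [h1, Finset.mul_sum]
    refine Finset.sum_congr rfl fun s _ => ?_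
    ring

theorem comp_wedge (z : Fin n) (a : ℕ → Fin n) (p q : ℕ) (x : Pt n) (ξ η : Form n)
    (hξ : DependsOn p ξ) (hη : DependsOn q η) :
    wedge p q ξ η a x = comp a (Phi z p x ξ * Phi z q x η) := by
  rw [← Phi_wedge z p q x ξ η hξ hη,
    comp_Phi z a _ x _ (dep_wedge hξ hη) (anti_wedge hξ hη)]

theorem eb_mul_Phi_mul (z v : Fin n) (p : ℕ) (x : Pt n) (ξ : Form n)
    (Y : ExteriorAlgebra ℝ (Fin n → ℝ)) :
    eb v * (Phi z p x ξ * Y) = (-1 : ℝ) ^ p • (Phi z p x ξ * (eb v * Y)) := by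
  rw [← mul_assoc, eb_Phi, smul_mul_assoc, mul_assoc]

theorem leibniz_zero (z : Fin n) (a : ℕ → Fin n) (p q : ℕ) (x : Pt n) (ξ η : Form n)
    (hξ : DependsOn p ξ) (hη : DependsOn q η)
    (hξd : ∀ a, DifferentiableAt ℝ (ξ a) x) (hηd : ∀ a, DifferentiableAt ℝ (η a) x) :
    extd (p + q) (wedge p q ξ η) a x
          = wedge (p + 1) q (extd p ξ) η a x
            + (-1 : ℝ) ^ p * wedge p (q + 1) ξ (extd q η) a x := by
  rw [comp_extd z a _ x _ (dep_wedge hξ hη) (anti_wedge hξ hη),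
    comp_wedge z a _ _ x _ _ (dep_extd hξ) hη, comp_wedge z a _ _ x _ _ hξ (dep_extd hη),
    Phi_extd z p x ξ hξ, Phi_extd z q x η hη, ← smul_eq_mul (a := (-1 : ℝ) ^ p), ← map_smul, ← map_add]
  congr 1
  rw [Finset.sum_mul, Finset.mul_sum, Finset.smul_sum, ← Finset.sum_add_distrib]
  refine Finset.sum_congr rfl fun k _ => ?_
  rw [Phi_congr z (p + q) x
    (η := fun a y => wedge p q (pdF k ξ) η a y + wedge p q ξ (pdF k η) a y)
    (pdF_wedge k p q x ξ η hξd hηd), Phi_add, Phi_wedge z p q x _ _ (dep_pdF k hξ) hη,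
    Phi_wedge z p q x _ _ hξ (dep_pdF k hη), mul_add, eb_mul_Phi_mul z k p x ξ, mul_assoc]

theorem onef_pc {U : Set (Pt n)} (ω : Fin n → Fin n → Pt n → ℝ)
    (Γ : Fin n → Fin n → Fin n → Pt n → ℝ) (hpc : PoissonCompat U ω Γ) {x : Pt n} (hx : x ∈ U)
    (i j : Fin n) :
    onef (fun m => pd m (ω i j) x) + ∑ k, ω k j x • th Γ x k i + ∑ k, ω i k x • th Γ x k j = 0 := by
  unfold th onef
  simp only [Finset.smul_sum, smul_smul]
  rw [Finset.sum_comm, Finset.sum_comm (γ := Fin n) (f := fun k m => (ω i k x * Γ j k m x) • eb m),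
    ← Finset.sum_add_distrib, ← Finset.sum_add_distrib]
  refine Finset.sum_eq_zero fun m _ => ?_
  rw [← Finset.sum_smul, ← Finset.sum_smul, ← add_smul, ← add_smul, hpc i j m x hx, zero_smul]

theorem ctr_Phi_zero (z m : Fin n) (x : Pt n) (ξ : Form n) : ctr m (Phi z 0 x ξ) = 0 := by
  unfold Phi
  simp [mono_zero, ctr_one]

theorem wedge_zero_left (p q : ℕ) (η : Form n) (a : ℕ → Fin n) (x : Pt n) (ξ : Form n)
    (h : ∀ a, ξ a x = 0) : wedge p q ξ η a x = 0 := by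
  simp [wedge, h]

theorem wedge_zero_right (p q : ℕ) (ξ : Form n) (a : ℕ → Fin n) (x : Pt n) (η : Form n)
    (h : ∀ a, η a x = 0) : wedge p q ξ η a x = 0 := by
  simp [wedge, h]

theorem comp_left (z : Fin n) (a : ℕ → Fin n) (p q : ℕ) (x : Pt n) (H ξ ζ : Form n) (i : Fin n)
    (hH : DependsOn 2 H) (hD : DependsOn p ξ) (hA : IsAnti p ξ) (hζ : DependsOn q ζ) :
    wedge (2 + (p - 1)) q (wedge 2 (p - 1) H (intr p i ξ)) ζ a x
      = comp a (Phi z 2 x H * ctr i (Phi z p x ξ) * Phi z q x ζ) := by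
  cases p with
  | zero =>
    rw [ctr_Phi_zero, mul_zero, zero_mul, map_zero]
    exact wedge_zero_left _ _ _ _ _ _ fun b => wedge_zero_right _ _ _ _ _ _ fun c => by simp [intr]
  | succ p =>
    rw [Nat.add_sub_cancel, comp_wedge z a _ _ x _ _ (dep_wedge hH (dep_intr i hD)) hζ,
      Phi_wedge z _ _ x _ _ hH (dep_intr i hD), Phi_intr z i p x ξ hD hA]

theorem comp_right (z : Fin n) (a : ℕ → Fin n) (p q : ℕ) (x : Pt n) (H ζ η : Form n) (j : Fin n)
    (hH : DependsOn 2 H) (hζ : DependsOn p ζ) (hD : DependsOn q η) (hA : IsAnti q η) :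
    wedge (2 + p) (q - 1) (wedge 2 p H ζ) (intr q j η) a x
      = comp a (Phi z 2 x H * Phi z p x ζ * ctr j (Phi z q x η)) := by
  cases q with
  | zero =>
    rw [ctr_Phi_zero, mul_zero, map_zero]
    exact wedge_zero_right _ _ _ _ _ _ fun c => by simp [intr]
  | succ q =>
    rw [Nat.add_sub_cancel, comp_wedge z a _ _ x _ _ (dep_wedge hH hζ) (dep_intr j hD),
      Phi_wedge z _ _ x _ _ hH hζ, Phi_intr z j q x η hD hA]

theorem comp_Qcorr (z : Fin n) (a : ℕ → Fin n) (ω : Fin n → Fin n → Pt n → ℝ)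
    (Γ : Fin n → Fin n → Fin n → Pt n → ℝ) (p q : ℕ) (x : Pt n) (ξ η : Form n)
    (hξ : DependsOn p ξ) (hη : DependsOn q η) :
    Qcorr ω Γ p q ξ η a x = comp a ((2⁻¹ : ℝ) • ∑ i, ∑ j, ω i j x •
      (Phi z p x (nabla Γ i p ξ) * Phi z q x (nabla Γ j q η))) := by
  rw [Qcorr_apply]
  simp only [map_smul, map_sum, smul_eq_mul,
    ← comp_wedge z a p q x _ _ (dep_nabla Γ _ hξ) (dep_nabla Γ _ hη)]

theorem comp_extd_Qcorr {U : Set (Pt n)} (hU : IsOpen U) (ω : Fin n → Fin n → Pt n → ℝ)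
    (hω : ∀ i j, ContDiffOn ℝ (⊤ : ℕ∞) (ω i j) U)
    (Γ : Fin n → Fin n → Fin n → Pt n → ℝ)
    (hΓ : ∀ i j k, ContDiffOn ℝ (⊤ : ℕ∞) (Γ i j k) U) (z : Fin n) (a : ℕ → Fin n) (p q : ℕ)
    (ξ η : Form n) (hξs : SmoothOn U ξ) (hηs : SmoothOn U η)
    (hξ : DependsOn p ξ) (hη : DependsOn q η) {x : Pt n} (hx : x ∈ U) :
    extd (p + q) (Qcorr ω Γ p q ξ η) a x = comp a ((2⁻¹ : ℝ) • ∑ i, ∑ j,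
      (onef (fun m => pd m (ω i j) x) *
          (Phi z p x (nabla Γ i p ξ) * Phi z q x (nabla Γ j q η))
        + ω i j x • ((∑ k, eb k * Phi z p x (pdF k (nabla Γ i p ξ)))
          * Phi z q x (nabla Γ j q η))
        + (-1 : ℝ) ^ p • ω i j x • (Phi z p x (nabla Γ i p ξ)
          * ∑ k, eb k * Phi z q x (pdF k (nabla Γ j q η))))) := by
  rw [comp_extd z a _ x _ (dep_Qcorr ω Γ hξ hη) (anti_Qcorr ω Γ hξ hη)]
  congr 1
  have h1 : ∀ k, Phi z (p + q) x (pdF k (Qcorr ω Γ p q ξ η)) = (2⁻¹ : ℝ) • ∑ i, ∑ j,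
      (pd k (ω i j) x • (Phi z p x (nabla Γ i p ξ) * Phi z q x (nabla Γ j q η))
        + ω i j x • (Phi z p x (pdF k (nabla Γ i p ξ)) * Phi z q x (nabla Γ j q η)
          + Phi z p x (nabla Γ i p ξ) * Phi z q x (pdF k (nabla Γ j q η)))) := by
    intro k
    have hn := fun i => dep_nabla Γ i hξ
    have hm := fun i => dep_nabla Γ i hη
    simp only [← Phi_wedge z p q x _ _ (hn _) (hm _),
      ← Phi_wedge z p q x _ _ (dep_pdF k (hn _)) (hm _),
      ← Phi_wedge z p q x _ _ (hn _) (dep_pdF k (hm _)), ← Phi_add, ← Phi_smul, ← Phi_sum]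
    exact Phi_congr z (p + q) x (pdF_Qcorr hU ω hω Γ hΓ k p q ξ η hξs hηs hx)
  simp only [h1, mul_smul_comm, ← Finset.smul_sum]
  congr 1
  simp only [Finset.mul_sum]
  rw [Finset.sum_comm]
  refine Finset.sum_congr rfl fun i _ => ?_
  rw [Finset.sum_comm]
  refine Finset.sum_congr rfl fun j _ => ?_
  simp only [onef, Finset.sum_mul, Finset.smul_sum, ← Finset.sum_add_distrib]
  refine Finset.sum_congr rfl fun k _ => ?_
  simp only [mul_add, mul_smul_comm, smul_mul_assoc, smul_add]
  rw [eb_mul_Phi_mul z k p x (nabla Γ i p ξ) (Phi z q x (pdF k (nabla Γ j q η))),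
    smul_comm (ω i j x) ((-1 : ℝ) ^ p), mul_assoc (eb k), add_assoc]

theorem final (U : Set (Pt n)) (hU : IsOpen U)
    (ω : Fin n → Fin n → Pt n → ℝ)
    (Γ : Fin n → Fin n → Fin n → Pt n → ℝ)
    (hωs : ∀ i j, ContDiffOn ℝ (⊤ : ℕ∞) (ω i j) U)
    (hΓs : ∀ i j k, ContDiffOn ℝ (⊤ : ℕ∞) (Γ i j k) U)
    (hanti : ∀ i j, ∀ x ∈ U, ω i j x = - ω j i x)
    (hpc : PoissonCompat U ω Γ)
    (p q : ℕ) (ξ η : Form n) (hξ : IsPForm U p ξ) (hη : IsPForm U q η)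
    (a : ℕ → Fin n) (x : Pt n) (hx : x ∈ U) :
      extd (p + q) (Qcorr ω Γ p q ξ η) a x
          - Qcorr ω Γ (p + 1) q (extd p ξ) η a x
          - (-1 : ℝ) ^ p * Qcorr ω Γ p (q + 1) ξ (extd q η) a x
        = - (∑ i, ∑ j,
              wedge (2 + (p - 1)) q
                (wedge 2 (p - 1) (Hform ω Γ j i) (intr p i ξ)) (nabla Γ j q η)) a x
          + (-1 : ℝ) ^ p *
            (∑ i, ∑ j,
              wedge (2 + p) (q - 1)
                (wedge 2 p (Hform ω Γ i j) (nabla Γ i p ξ)) (intr q j η)) a x := by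
  obtain ⟨hξD, hξA, hξs⟩ := hξ
  obtain ⟨hηD, hηA, hηs⟩ := hη
  generalize hz : a 0 = z
  have key := alg_core ((-1 : ℝ) ^ p) (neg_one_pow_sq p) (fun i j => ω i j x)
    (fun i j => onef (fun m => pd m (ω i j) x)) (th Γ x) (Ff Γ x)
    (fun i => Phi z p x (nabla Γ i p ξ)) (fun i => Phi z q x (nabla Γ i q η))
    (fun i => ∑ k, eb k * Phi z p x (pdF k (nabla Γ i p ξ)))
    (fun i => Phi z (p + 1) x (nabla Γ i (p + 1) (extd p ξ)))
    (fun i => ∑ k, eb k * Phi z q x (pdF k (nabla Γ i q η)))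
    (fun i => Phi z (q + 1) x (nabla Γ i (q + 1) (extd q η)))
    (fun m => ctr m (Phi z p x ξ)) (fun m => ctr m (Phi z q x η))
    (fun i => commutator hU Γ hΓs z i p ξ hξs hξD hx)
    (fun i => commutator hU Γ hΓs z i q η hηs hηD hx)
    (fun i j k => onef_Phi z _ p x _) (fun i j k => Ff_Phi Γ j k z p x _)
    (fun i j => onef_pc ω Γ hpc hx i j)
  have L : extd (p + q) (Qcorr ω Γ p q ξ η) a x
          - Qcorr ω Γ (p + 1) q (extd p ξ) η a x
          - (-1 : ℝ) ^ p * Qcorr ω Γ p (q + 1) ξ (extd q η) a x = comp a ((2⁻¹ : ℝ) •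
      (∑ i, ∑ j, ∑ s, ω s j x •
          (Ff Γ x s i * ctr i (Phi z p x ξ) * Phi z q x (nabla Γ j q η))
        + (-1 : ℝ) ^ p • ∑ i, ∑ j, ∑ s, ω i s x •
          (Ff Γ x s j * Phi z p x (nabla Γ i p ξ) * ctr j (Phi z q x η)))) := by
    rw [← key, comp_extd_Qcorr hU ω hωs Γ hΓs z a p q ξ η hξs hηs hξD hηD hx,
      comp_Qcorr z a ω Γ _ _ x _ _ (dep_extd hξD) hηD,
      comp_Qcorr z a ω Γ _ _ x _ _ hξD (dep_extd hηD), ← smul_eq_mul (a := (-1 : ℝ) ^ p), ← map_smul,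
      ← map_sub, ← map_sub, smul_comm ((-1 : ℝ) ^ p), ← smul_sub, ← smul_sub]
  rw [L]
  have R1 : (∑ i, ∑ j, wedge (2 + (p - 1)) q
      (wedge 2 (p - 1) (Hform ω Γ j i) (intr p i ξ)) (nabla Γ j q η)) a x
      = - comp a ((2⁻¹ : ℝ) • ∑ i, ∑ j, ∑ s, ω s j x •
        (Ff Γ x s i * ctr i (Phi z p x ξ) * Phi z q x (nabla Γ j q η))) := by
    simp only [Finset.sum_apply,
      comp_left z a p q x _ ξ _ _ (dep_Hform ω Γ _ _) hξD hξA (dep_nabla Γ _ hηD),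
      Phi_Hform hU ω Γ hΓs z _ _ hx, ← map_sum, ← map_neg]
    congr 1
    simp only [Finset.smul_sum, ← Finset.sum_neg_distrib, Finset.sum_mul, smul_mul_assoc]
    refine Finset.sum_congr rfl fun i _ => Finset.sum_congr rfl fun j _ =>
      Finset.sum_congr rfl fun s _ => ?_
    rw [hanti j s x hx, neg_smul, smul_neg]
  have R2 : (∑ i, ∑ j, wedge (2 + p) (q - 1)
      (wedge 2 p (Hform ω Γ i j) (nabla Γ i p ξ)) (intr q j η)) a x
      = comp a ((2⁻¹ : ℝ) • ∑ i, ∑ j, ∑ s, ω i s x •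
        (Ff Γ x s j * Phi z p x (nabla Γ i p ξ) * ctr j (Phi z q x η))) := by
    simp only [Finset.sum_apply,
      comp_right z a p q x _ _ η _ (dep_Hform ω Γ _ _) (dep_nabla Γ _ hξD) hηD hηA,
      Phi_Hform hU ω Γ hΓs z _ _ hx, ← map_sum]
    congr 1
    simp only [Finset.smul_sum, Finset.sum_mul, smul_mul_assoc]
  rw [R1, R2, neg_neg, smul_add, map_add, smul_comm (2⁻¹ : ℝ) ((-1 : ℝ) ^ p), map_smul,
    map_smul, map_smul]
  rfl

/-- for Poisson-compatible `(ω, ∇)` and the product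
`ξ ∧_Q η = ξ ∧ η + (λ/2) ω^{ij} ∇_i ξ ∧ ∇_j η` over `ℝ[λ]/(λ²)`, the Leibniz defect is
`d(ξ ∧_Q η) − dξ ∧_Q η − (−1)^p ξ ∧_Q dη
  = −λ H^{ji} ∧ (∂_i⌟ξ) ∧ ∇_j η + λ (−1)^p H^{ij} ∧ ∇_i ξ ∧ (∂_j⌟η)`.
The `λ⁰`-component is the classical Leibniz rule and the `λ¹`-component is the displayed
identity. -/
theorem statement_8 (U : Set (Pt n)) (hU : IsOpen U)
    (ω : Fin n → Fin n → Pt n → ℝ)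
    (Γ : Fin n → Fin n → Fin n → Pt n → ℝ)
    (hωs : ∀ i j, ContDiffOn ℝ (⊤ : ℕ∞) (ω i j) U)
    (hΓs : ∀ i j k, ContDiffOn ℝ (⊤ : ℕ∞) (Γ i j k) U)
    (hanti : ∀ i j, ∀ x ∈ U, ω i j x = - ω j i x)
    (hpc : PoissonCompat U ω Γ)
    (p q : ℕ) (ξ η : Form n) (hξ : IsPForm U p ξ) (hη : IsPForm U q η) :
    ∀ (a : ℕ → Fin n), ∀ x ∈ U,
      (extd (p + q) (wedge p q ξ η) a x
          = wedge (p + 1) q (extd p ξ) η a x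
            + (-1 : ℝ) ^ p * wedge p (q + 1) ξ (extd q η) a x) ∧
      (extd (p + q) (Qcorr ω Γ p q ξ η) a x
          - Qcorr ω Γ (p + 1) q (extd p ξ) η a x
          - (-1 : ℝ) ^ p * Qcorr ω Γ p (q + 1) ξ (extd q η) a x
        = - (∑ i, ∑ j,
              wedge (2 + (p - 1)) q
                (wedge 2 (p - 1) (Hform ω Γ j i) (intr p i ξ)) (nabla Γ j q η)) a x
          + (-1 : ℝ) ^ p *
            (∑ i, ∑ j,
              wedge (2 + p) (q - 1)
                (wedge 2 p (Hform ω Γ i j) (nabla Γ i p ξ)) (intr q j η)) a x) := by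
  intro a x hx
  refine ⟨leibniz_zero (a 0) a p q x ξ η hξ.1 hη.1
    (fun b => smooth_diffAt hU (hξ.2.2 b) hx) (fun b => smooth_diffAt hU (hη.2.2 b) hx), ?_⟩
  exact final U hU ω Γ hωs hΓs hanti hpc p q ξ η hξ hη a x hx

end Stmt8
end
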